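/- arXiv:2110.01838 — 6 statements merged into one kernel-verified Lean document; each statement's English description precedes it below -/
import Mathlib

section
/- For every integer n ≥ 3, the domination number of the flower snark J_n equals n, and the independent domination number of J_n also equals n. -/
/-- Vertices of the flower snark `J_n`: a copy index `i : Fin n` together with
one of the four vertices of the copy: `0 = a`, `1 = b`, `2 = c`, `3 = d`. -/
abbrev FV (n : ℕ) := Fin n × Fin 4

/-- The flower snark `J_n`: in each copy, `a^i` is adjacent to `b^i, c^i, d^i`;
the `b` vertices form an `n`-cycle; the `c` and `d` vertices form a `2n`-cycle
via the paths `c^i c^{i+1}`, `d^i d^{i+1}` (for `1 ≤ i ≤ n-1`) together with the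
twist edges `c^n d^1` and `d^n c^1`. -/
def flowerSnark (n : ℕ) : SimpleGraph (FV n) :=
  SimpleGraph.fromRel (fun v w =>
    (v.1 = w.1 ∧ v.2 = 0 ∧ w.2 ≠ 0) ∨
    (((v.1 : ℕ) + 1) % n = (w.1 : ℕ) ∧ v.2 = 1 ∧ w.2 = 1) ∨
    ((v.1 : ℕ) + 1 = (w.1 : ℕ) ∧ v.2 = 2 ∧ w.2 = 2) ∨
    ((v.1 : ℕ) + 1 = (w.1 : ℕ) ∧ v.2 = 3 ∧ w.2 = 3) ∨
    ((v.1 : ℕ) = n - 1 ∧ (w.1 : ℕ) = 0 ∧ v.2 = 2 ∧ w.2 = 3) ∨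
    ((v.1 : ℕ) = n - 1 ∧ (w.1 : ℕ) = 0 ∧ v.2 = 3 ∧ w.2 = 2))

/-- `S` is a dominating set of `J_n`. -/
def Dominating (n : ℕ) (S : Set (FV n)) : Prop :=
  ∀ v ∉ S, ∃ w ∈ S, (flowerSnark n).Adj v w

/-- `S` is a minimal dominating set of `J_n`. -/
def MinimalDominating (n : ℕ) (S : Set (FV n)) : Prop :=
  Dominating n S ∧ ∀ T : Set (FV n), T ⊂ S → ¬ Dominating n T

/-- `S` is an independent set of `J_n`. -/
def IndependentSet (n : ℕ) (S : Set (FV n)) : Prop :=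
  ∀ v ∈ S, ∀ w ∈ S, ¬ (flowerSnark n).Adj v w

/-- `S` is a 2-dominating set of `J_n`: every vertex outside `S` has at least
two neighbours in `S`. -/
def TwoDominating (n : ℕ) (S : Set (FV n)) : Prop :=
  ∀ v ∉ S, ∃ w₁ ∈ S, ∃ w₂ ∈ S, w₁ ≠ w₂ ∧
    (flowerSnark n).Adj v w₁ ∧ (flowerSnark n).Adj v w₂

/-- `S` is a total dominating set of `J_n`. -/
def TotalDominating (n : ℕ) (S : Set (FV n)) : Prop :=
  ∀ v : FV n, ∃ w ∈ S, (flowerSnark n).Adj v w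

/-- `S` is a connected dominating set of `J_n`. -/
def ConnectedDominating (n : ℕ) (S : Set (FV n)) : Prop :=
  Dominating n S ∧ ((flowerSnark n).induce S).Connected

/-- `S` is a secure dominating set of `J_n`. -/
def SecureDominating (n : ℕ) (S : Set (FV n)) : Prop :=
  Dominating n S ∧ ∀ v ∉ S, ∃ w ∈ S,
    (flowerSnark n).Adj v w ∧ Dominating n (insert v (S \ {w}))

/-- `v` is undefended with respect to `f`: neither `v` nor any of its
neighbours carries a guard. -/
def Undefended (n : ℕ) (f : FV n → ℕ) (v : FV n) : Prop :=
  f v = 0 ∧ ∀ w, (flowerSnark n).Adj v w → f w = 0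

/-- `f` is a weak Roman dominating function on `J_n`: `f` takes values in
`{0,1,2}`, has no undefended vertex, and every vertex `v` with `f v = 0` has a
neighbour `w` with `f w ≥ 1` such that moving one guard from `w` to `v` leaves
no undefended vertex. -/
def WeakRomanDominating (n : ℕ) (f : FV n → ℕ) : Prop :=
  (∀ v, f v ≤ 2) ∧ (∀ v, ¬ Undefended n f v) ∧
  ∀ v, f v = 0 → ∃ w, (flowerSnark n).Adj v w ∧ 1 ≤ f w ∧
    ∀ u, ¬ Undefended n
      (fun x => if x = v then 1 else if x = w then f w - 1 else f x) u

/-- The domination number of `J_n`. -/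
noncomputable def dominationNumber (n : ℕ) : ℕ :=
  sInf {k | ∃ S : Set (FV n), Dominating n S ∧ S.ncard = k}

/-- The independent domination number of `J_n`. -/
noncomputable def indepDominationNumber (n : ℕ) : ℕ :=
  sInf {k | ∃ S : Set (FV n), Dominating n S ∧ IndependentSet n S ∧ S.ncard = k}

/-- The upper domination number of `J_n`: the maximum cardinality of a minimal
dominating set. -/
noncomputable def upperDominationNumber (n : ℕ) : ℕ :=
  sSup {k | ∃ S : Set (FV n), MinimalDominating n S ∧ S.ncard = k}

/-- The 2-domination number of `J_n`. -/
noncomputable def twoDominationNumber (n : ℕ) : ℕ :=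
  sInf {k | ∃ S : Set (FV n), TwoDominating n S ∧ S.ncard = k}

/-- The total domination number of `J_n`. -/
noncomputable def totalDominationNumber (n : ℕ) : ℕ :=
  sInf {k | ∃ S : Set (FV n), TotalDominating n S ∧ S.ncard = k}

/-- The connected domination number of `J_n`. -/
noncomputable def connectedDominationNumber (n : ℕ) : ℕ :=
  sInf {k | ∃ S : Set (FV n), ConnectedDominating n S ∧ S.ncard = k}

/-- The secure domination number of `J_n`. -/
noncomputable def secureDominationNumber (n : ℕ) : ℕ :=
  sInf {k | ∃ S : Set (FV n), SecureDominating n S ∧ S.ncard = k}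

/-- The weak Roman domination number of `J_n`. -/
noncomputable def weakRomanDominationNumber (n : ℕ) : ℕ :=
  sInf {k | ∃ f : FV n → ℕ, WeakRomanDominating n f ∧ ∑ v, f v = k}

/-- The weight of the copy `J^(m mod n)` in a vertex set `S`, i.e. the number
of vertices of `S` among `a, b, c, d` of that copy. -/
noncomputable def copyWeight {n : ℕ} (S : Set (FV n)) (m : ℕ) : ℕ :=
  (S ∩ {v : FV n | (v.1 : ℕ) = m % n}).ncard

/-- The weight of the copy `J^(m mod n)` in a function `f`, i.e.
`f a + f b + f c + f d` over that copy. -/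
def fCopyWeight {n : ℕ} (f : FV n → ℕ) (m : ℕ) : ℕ :=
  ∑ v ∈ Finset.univ.filter (fun v : FV n => (v.1 : ℕ) = m % n), f v

/-- Cyclic successor. -/
def fsS {n : ℕ} (i : Fin n) : Fin n :=
  ⟨if (i : ℕ) + 1 < n then i + 1 else 0, by have := i.2; split_ifs <;> omega⟩

/-- Cyclic predecessor. -/
def fsP {n : ℕ} (i : Fin n) : Fin n :=
  ⟨if (i : ℕ) = 0 then n - 1 else i - 1, by have := i.2; split_ifs <;> omega⟩

/-- Swap of `c` and `d`. -/
def fsw (k : Fin 4) : Fin 4 := if k = 2 then 3 else if k = 3 then 2 else k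

/-- A list of four vertices containing the closed neighbourhood. -/
def fsN {n : ℕ} (w : FV n) (k : Fin 4) : FV n :=
  if w.2 = 0 then (w.1, k) else
  if k = 0 then w else if k = 1 then (w.1, 0) else
  if k = 2 then (fsS w.1, if (w.1 : ℕ) + 1 < n then w.2 else fsw w.2)
  else (fsP w.1, if (w.1 : ℕ) = 0 then fsw w.2 else w.2)

lemma fsN_self {n : ℕ} (w : FV n) : ∃ k, fsN w k = w := by
  by_cases h : w.2 = 0
  · exact ⟨0, by rw [fsN, if_pos h, ← h]⟩
  · exact ⟨0, by simp [fsN, h]⟩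

lemma fsN_cyc {n : ℕ} {i j : Fin n} (h : ((i : ℕ) + 1) % n = j) :
    fsS i = j ∧ fsP j = i := by
  have hi := i.2
  have hj := j.2
  by_cases h1 : (i : ℕ) + 1 < n
  · rw [Nat.mod_eq_of_lt h1] at h
    constructor <;> apply Fin.ext <;> simp only [fsS, fsP] <;> split_ifs <;> omega
  · have : (i : ℕ) + 1 = n := by omega
    rw [this, Nat.mod_self] at h
    constructor <;> apply Fin.ext <;> simp only [fsS, fsP] <;> split_ifs <;> omega

lemma fsN_rel {n : ℕ} {i j : Fin n} {k l : Fin 4} (h : ((i : ℕ) + 1) % n = j)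
    (hk : k ≠ 0) (hl : l ≠ 0) (h1 : (i : ℕ) + 1 < n → k = l)
    (h2 : (i : ℕ) + 1 = n → l = fsw k) :
    fsN (i, k) 2 = (j, l) ∧ fsN (j, l) 3 = (i, k) := by
  obtain ⟨e1, e2⟩ := fsN_cyc h
  have hi := i.2
  have hsw : ∀ k, fsw (fsw k) = k := by decide
  by_cases h3 : (i : ℕ) + 1 < n
  · have hj : (j : ℕ) ≠ 0 := by rw [Nat.mod_eq_of_lt h3] at h; omega
    simp [fsN, hk, hl, e1, e2, h3, hj, h1 h3]
  · have h4 : (i : ℕ) + 1 = n := by omega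
    have hj : (j : ℕ) = 0 := by rw [h4, Nat.mod_self] at h; omega
    have hl' := hl
    rw [h2 h4] at hl'
    simp [fsN, hk, hl', e1, e2, h3, hj, h2 h4, hsw]

lemma fsN_adj {n : ℕ} {v w : FV n} (h : (flowerSnark n).Adj v w) : ∃ k, fsN w k = v := by
  rw [flowerSnark, SimpleGraph.fromRel_adj] at h
  obtain ⟨-, h⟩ := h
  obtain ⟨i, k⟩ := v
  obtain ⟨j, l⟩ := w
  have hi := i.2
  have hj := j.2
  have m1 : ∀ {a b : Fin n}, (a : ℕ) + 1 = b → ((a : ℕ) + 1) % n = b := by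
    intro a b hab
    rw [hab, Nat.mod_eq_of_lt b.2]
  have m2 : ∀ {a b : Fin n}, (a : ℕ) = n - 1 → (b : ℕ) = 0 → ((a : ℕ) + 1) % n = b := by
    intro a b ha hb
    have : (a : ℕ) + 1 = n := by have := a.2; omega
    rw [this, Nat.mod_self, hb]
  dsimp only at h
  rcases h with (⟨rfl, rfl, h⟩ | ⟨h, rfl, rfl⟩ | ⟨h, rfl, rfl⟩ | ⟨h, rfl, rfl⟩ |
    ⟨h, h', rfl, rfl⟩ | ⟨h, h', rfl, rfl⟩) | (⟨rfl, rfl, h⟩ | ⟨h, rfl, rfl⟩ | ⟨h, rfl, rfl⟩ |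
    ⟨h, rfl, rfl⟩ | ⟨h, h', rfl, rfl⟩ | ⟨h, h', rfl, rfl⟩)
  · exact ⟨1, by simp [fsN, h]⟩
  · exact ⟨3, (fsN_rel h (by decide) (by decide) (fun _ => rfl) (fun _ => rfl)).2⟩
  · exact ⟨3, (fsN_rel (m1 h) (by decide) (by decide) (fun _ => rfl) (by omega)).2⟩
  · exact ⟨3, (fsN_rel (m1 h) (by decide) (by decide) (fun _ => rfl) (by omega)).2⟩
  · exact ⟨3, (fsN_rel (m2 h h') (by decide) (by decide) (by omega) (fun _ => by decide)).2⟩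
  · exact ⟨3, (fsN_rel (m2 h h') (by decide) (by decide) (by omega) (fun _ => by decide)).2⟩
  · exact ⟨k, by simp [fsN]⟩
  · exact ⟨2, (fsN_rel h (by decide) (by decide) (fun _ => rfl) (fun _ => rfl)).1⟩
  · exact ⟨2, (fsN_rel (m1 h) (by decide) (by decide) (fun _ => rfl) (by omega)).1⟩
  · exact ⟨2, (fsN_rel (m1 h) (by decide) (by decide) (fun _ => rfl) (by omega)).1⟩
  · exact ⟨2, (fsN_rel (m2 h h') (by decide) (by decide) (by omega) (fun _ => by decide)).1⟩
  · exact ⟨2, (fsN_rel (m2 h h') (by decide) (by decide) (by omega) (fun _ => by decide)).1⟩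

lemma fs_lower {n : ℕ} {S : Set (FV n)} (h : Dominating n S) : n ≤ S.ncard := by
  have hs : Function.Surjective (fun p : S × Fin 4 => fsN p.1.1 p.2) := by
    intro v
    by_cases hv : v ∈ S
    · obtain ⟨k, hk⟩ := fsN_self v
      exact ⟨(⟨v, hv⟩, k), hk⟩
    · obtain ⟨w, hw, ha⟩ := h v hv
      obtain ⟨k, hk⟩ := fsN_adj ha
      exact ⟨(⟨w, hw⟩, k), hk⟩
  have := Nat.card_le_card_of_surjective _ hs
  simp only [Nat.card_prod, Nat.card_eq_fintype_card (α := Fin _), Fintype.card_fin,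
    Nat.card_coe_set_eq] at this
  omega

lemma fs_upper (n : ℕ) : ∃ S : Set (FV n), Dominating n S ∧ IndependentSet n S ∧ S.ncard = n := by
  refine ⟨Set.range (fun i : Fin n => ((i, 0) : FV n)), ?_, ?_, ?_⟩
  · rintro ⟨i, k⟩ hv
    have hk : k ≠ 0 := by
      rintro rfl
      exact hv ⟨i, rfl⟩
    refine ⟨(i, 0), ⟨i, rfl⟩, ?_⟩
    rw [flowerSnark, SimpleGraph.fromRel_adj]
    exact ⟨by simp [hk], Or.inr (Or.inl ⟨rfl, rfl, hk⟩)⟩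
  · rintro _ ⟨i, rfl⟩ _ ⟨j, rfl⟩ h
    rw [flowerSnark, SimpleGraph.fromRel_adj] at h
    simp at h
  · rw [← Set.image_univ, Set.ncard_image_of_injective, Set.ncard_univ]
    · simp
    · intro a b h
      exact (Prod.mk.inj h).1

/-- For every `n ≥ 3`, the domination number and the independent domination
number of the flower snark `J_n` both equal `n`. -/
theorem flowerSnark_domination_and_indepDomination (n : ℕ) (hn : 3 ≤ n) :
    dominationNumber n = n ∧ indepDominationNumber n = n := by
  obtain ⟨S, h1, h2, h3⟩ := fs_upper n
  constructor
  · apply le_antisymm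
    · exact Nat.sInf_le ⟨S, h1, h3⟩
    · refine le_csInf ⟨n, S, h1, h3⟩ ?_
      rintro k ⟨T, hT, rfl⟩
      exact fs_lower hT
  · apply le_antisymm
    · exact Nat.sInf_le ⟨S, h1, h2, h3⟩
    · refine le_csInf ⟨n, S, h1, h2, h3⟩ ?_
      rintro k ⟨T, hT, -, rfl⟩
      exact fs_lower hT
end

section
/- For every integer n ≥ 3, the upper domination number of the flower snark J_n equals 2n if n is even, and equals 2n − 1 if n is odd. -/
open Classical in
theorem gen_bound {V : Type} [Fintype V] (G : SimpleGraph V) (S : Finset V)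
    (hdeg : ∀ v, (Finset.univ.filter (fun w => G.Adj v w)).card = 3)
    (hmin : ∀ s ∈ S, (∀ w, G.Adj s w → w ∉ S) ∨
      ∃ u, u ∉ S ∧ G.Adj u s ∧ ∀ w ∈ S, G.Adj u w → w = s) :
    S.card ≤ Sᶜ.card ∧ (S.card = Sᶜ.card → ∃ e : V → V, ∀ u, u ∉ S →
      (∀ w, G.Adj u w → w ∈ S ∧ ∀ z, G.Adj w z → z ∉ S) ∨
      (∃ p ∈ S, u = e p ∧ G.Adj u p ∧ (∃ z, G.Adj p z ∧ z ∈ S) ∧ ∀ w ∈ S, G.Adj u w → w = p)) := by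
  have hch : ∀ s, ∃ u, s ∈ S → ¬ (∀ w, G.Adj s w → w ∉ S) →
      (u ∉ S ∧ G.Adj u s ∧ ∀ w ∈ S, G.Adj u w → w = s) := by
    intro s
    by_cases hs : s ∈ S
    · rcases hmin s hs with h | ⟨u, hu⟩
      · exact ⟨s, fun _ h' => absurd h h'⟩
      · exact ⟨u, fun _ _ => hu⟩
    · exact ⟨s, fun h => absurd h hs⟩
  choose e he using hch
  set iso : V → Prop := fun s => ∀ w, G.Adj s w → w ∉ S with hiso
  let g : V → V → ℕ := fun s u =>
    if iso s then (if G.Adj s u then 1 else 0) else (if u = e s then 3 else 0)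
  have hrow : ∀ s ∈ S, ∑ u ∈ Sᶜ, g s u = 3 := by
    intro s hs
    by_cases h : iso s
    · simp only [g, h, if_true]
      rw [← Finset.card_filter, ← hdeg s]
      congr 1
      ext w
      simp only [Finset.mem_filter, Finset.mem_compl, Finset.mem_univ, true_and]
      exact ⟨fun h => h.2, fun h' => ⟨h w h', h'⟩⟩
    · simp only [g, h, if_false]
      rw [Finset.sum_ite_eq']
      simp [(he s hs h).1]
  have hcol : ∀ u ∈ Sᶜ, ∑ s ∈ S, g s u ≤ 3 ∧ (∑ s ∈ S, g s u = 3 →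
      (∀ w, G.Adj u w → w ∈ S ∧ ∀ z, G.Adj w z → z ∉ S) ∨
      (∃ p ∈ S, u = e p ∧ G.Adj u p ∧ (∃ z, G.Adj p z ∧ z ∈ S) ∧ ∀ w ∈ S, G.Adj u w → w = p)) := by
    intro u hu
    by_cases hq : ∃ p ∈ S, ¬ iso p ∧ u = e p
    · obtain ⟨p, hp, hpi, rfl⟩ := hq
      obtain ⟨h1, h2, h3⟩ := he p hp hpi
      constructor
      · rw [Finset.sum_eq_single_of_mem p hp]
        · simp [g, hpi]
        · intro s hs hsp
          by_cases h : iso s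
          · simp only [g, h, if_true, ite_eq_right_iff]
            intro ha
            exact absurd (h3 s hs ha.symm) hsp
          · simp only [g, h, if_false, ite_eq_right_iff]
            intro ha
            have := (he s hs h).2.1
            rw [← ha] at this
            exact absurd (h3 s hs this) hsp
      · intro _
        right
        refine ⟨p, hp, rfl, h2, ?_, h3⟩
        simp only [hiso] at hpi
        push Not at hpi
        exact hpi
    · push Not at hq
      have hs : ∑ s ∈ S, g s u = (S.filter (fun s => iso s ∧ G.Adj u s)).card := by
        rw [Finset.card_filter]
        apply Finset.sum_congr rfl
        intro s hs
        by_cases h : iso s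
        · simp [g, h, G.adj_comm]
        · simp [g, h, hq s hs h]
      have hsub : (S.filter (fun s => iso s ∧ G.Adj u s)) ⊆
          (Finset.univ.filter (fun w => G.Adj u w)) := by
        intro w hw
        simp only [Finset.mem_filter] at hw ⊢
        exact ⟨Finset.mem_univ _, hw.2.2⟩
      rw [hs]
      refine ⟨(Finset.card_le_card hsub).trans (hdeg u).le, fun h3 => Or.inl ?_⟩
      have heq := Finset.eq_of_subset_of_card_le hsub (by rw [hdeg, h3])
      intro w hw
      have : w ∈ (Finset.univ.filter (fun w => G.Adj u w)) := by simp [hw]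
      rw [← heq, Finset.mem_filter] at this
      exact ⟨this.1, this.2.1⟩
  have htot : ∑ u ∈ Sᶜ, ∑ s ∈ S, g s u = 3 * S.card := by
    rw [Finset.sum_comm, Finset.sum_congr rfl hrow]
    simp [mul_comm]
  have hle : ∑ u ∈ Sᶜ, ∑ s ∈ S, g s u ≤ ∑ u ∈ Sᶜ, 3 :=
    Finset.sum_le_sum (fun u hu => (hcol u hu).1)
  have h3 : ∑ u ∈ Sᶜ, 3 = 3 * Sᶜ.card := by simp [mul_comm]
  refine ⟨by omega, fun heq => ⟨e, fun u hu => ?_⟩⟩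
  have hu' : u ∈ Sᶜ := by simpa using hu
  refine (hcol u hu').2 ?_
  exact (Finset.sum_eq_sum_iff_of_le (fun u hu => (hcol u hu).1)).1 (by omega) u hu'

theorem gen_eq {V : Type} (G : SimpleGraph V) (S : Finset V)
    (hmin : ∀ s ∈ S, (∀ w, G.Adj s w → w ∉ S) ∨
      ∃ u, u ∉ S ∧ G.Adj u s ∧ ∀ w ∈ S, G.Adj u w → w = s)
    (e : V → V) (h : ∀ u, u ∉ S →
      (∀ w, G.Adj u w → w ∈ S ∧ ∀ z, G.Adj w z → z ∉ S) ∨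
      (∃ p ∈ S, u = e p ∧ G.Adj u p ∧ (∃ z, G.Adj p z ∧ z ∈ S) ∧ ∀ w ∈ S, G.Adj u w → w = p)) :
    ∃ A : V → Prop, (∀ v w, G.Adj v w → (A v → A w)) ∧
      (∀ v, A v → ∀ w, G.Adj v w → (w ∈ S ↔ v ∉ S)) ∧
      (∀ v, ¬ A v → ∃ w, G.Adj v w ∧ ∀ z, G.Adj v z → ((z ∈ S ↔ v ∉ S) ↔ z = w)) := by
  refine ⟨fun v => (v ∈ S ∧ ∀ w, G.Adj v w → w ∉ S) ∨
    (v ∉ S ∧ ∀ w, G.Adj v w → w ∈ S ∧ ∀ z, G.Adj w z → z ∉ S), ?_, ?_, ?_⟩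
  · intro v w hvw hv
    rcases hv with ⟨hv, hv'⟩ | ⟨hv, hv'⟩
    · right
      refine ⟨hv' w hvw, ?_⟩
      rcases h w (hv' w hvw) with h1 | ⟨p, hp, _, h2, ⟨z, hz, hzS⟩, h4⟩
      · exact h1
      · have := h4 v hv hvw.symm
        subst this
        exact absurd hzS (hv' z hz)
    · left
      exact hv' w hvw
  · intro v hv w hvw
    rcases hv with ⟨hv, hv'⟩ | ⟨hv, hv'⟩
    · simp [hv, hv' w hvw]
    · simp [hv, hv' w hvw]
  · intro v hv
    by_cases hvS : v ∈ S
    · rcases hmin v hvS with h1 | ⟨u, hu, huv, h2⟩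
      · exact absurd (Or.inl ⟨hvS, h1⟩) hv
      · refine ⟨u, huv.symm, fun z hvz => ?_⟩
        constructor
        · intro hz
          have hzS : z ∉ S := fun h' => (hz.1 h') hvS
          have key : ∀ y, y ∉ S → G.Adj v y → y = e v := by
            intro y hy hvy
            rcases h y hy with h3 | ⟨p, hp, hyp, _, _, h4⟩
            · exact absurd (Or.inl ⟨hvS, (h3 v hvy.symm).2⟩) hv
            · rw [h4 v hvS hvy.symm]
              exact hyp
          rw [key z hzS hvz, key u hu huv.symm]
        · rintro rfl
          simp [hu, hvS]
    · rcases h v hvS with h1 | ⟨p, hp, _, hvp, _, h4⟩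
      · exact absurd (Or.inr ⟨hvS, h1⟩) hv
      · refine ⟨p, hvp, fun z hvz => ?_⟩
        constructor
        · intro hz
          exact h4 z (hz.2 hvS) hvz
        · rintro rfl
          simp [hp, hvS]

def snSw (k : Fin 4) : Fin 4 := if k = 2 then 3 else if k = 3 then 2 else k

def snNxt {n : ℕ} (v : FV n) : FV n :=
  if h : (v.1 : ℕ) + 1 < n then (⟨v.1 + 1, h⟩, v.2)
  else (⟨0, by have := v.1.2; omega⟩, snSw v.2)

def snPrv {n : ℕ} (v : FV n) : FV n :=
  if (v.1 : ℕ) = 0 then (⟨n - 1, by have := v.1.2; omega⟩, snSw v.2)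
  else (⟨v.1 - 1, by have := v.1.2; omega⟩, v.2)

theorem snSw_sw (k : Fin 4) : snSw (snSw k) = k := by
  revert k; decide

theorem snSw_ne (k : Fin 4) (h : k ≠ 0) : snSw k ≠ 0 := by
  revert k; decide

theorem snPrv_nxt {n : ℕ} (v : FV n) : snPrv (snNxt v) = v := by
  obtain ⟨⟨i, hi⟩, k⟩ := v
  unfold snNxt
  split_ifs with h
  · simp [snPrv]
  · simp only at h
    simp only [snPrv, if_true, snSw_sw]
    congr 2
    omega

theorem snAdj0 (n : ℕ) (i : Fin n) (w : FV n) :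
    (flowerSnark n).Adj (i, 0) w ↔ w = (i, 1) ∨ w = (i, 2) ∨ w = (i, 3) := by
  obtain ⟨j, l⟩ := w
  simp only [flowerSnark, SimpleGraph.fromRel_adj, Prod.mk.injEq, ne_eq]
  fin_cases l <;> simp <;> grind

theorem snAdjk (n : ℕ) (hn : 3 ≤ n) (i : Fin n) (k : Fin 4) (hk : k ≠ 0) (w : FV n) :
    (flowerSnark n).Adj (i, k) w ↔
      w = (i, 0) ∨ w = snNxt (i, k) ∨ w = snPrv (i, k) := by
  obtain ⟨⟨j, hj⟩, l⟩ := w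
  obtain ⟨i, hi⟩ := i
  have hmod : ∀ m, m < n → (m + 1) % n = if m + 1 < n then m + 1 else 0 := by
    intro m hm
    split_ifs with h
    · exact Nat.mod_eq_of_lt h
    · have : m + 1 = n := by omega
      rw [this, Nat.mod_self]
  simp only [flowerSnark, SimpleGraph.fromRel_adj, ne_eq, hmod i hi, hmod j hj, snNxt, snPrv]
  fin_cases k <;> fin_cases l <;> simp [snSw, hk] at hk ⊢ <;>
    split_ifs <;> simp <;> omega

theorem snDist (n : ℕ) (hn : 3 ≤ n) (i : Fin n) (k : Fin 4) (hk : k ≠ 0) :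
    (i, (0 : Fin 4)) ≠ snNxt (i, k) ∧ (i, (0 : Fin 4)) ≠ snPrv (i, k) ∧
      snNxt (i, k) ≠ snPrv (i, k) := by
  obtain ⟨i, hi⟩ := i
  have := snSw_ne k hk
  refine ⟨?_, ?_, ?_⟩
  · simp only [snNxt]
    split_ifs <;> simp [Ne.symm this, Ne.symm hk]
  · simp only [snPrv]
    split_ifs <;> simp [Ne.symm this, Ne.symm hk]
  · simp only [snNxt, snPrv]
    split_ifs <;> simp <;> omega

open Classical in
theorem snDeg (n : ℕ) (hn : 3 ≤ n) (v : FV n) :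
    (Finset.univ.filter (fun w => (flowerSnark n).Adj v w)).card = 3 := by
  obtain ⟨i, k⟩ := v
  rw [Finset.card_eq_three]
  by_cases hk : k = 0
  · subst hk
    refine ⟨(i, 1), (i, 2), (i, 3), by simp, by simp, by simp, ?_⟩
    ext w
    simp [snAdj0]
  · obtain ⟨h1, h2, h3⟩ := snDist n hn i k hk
    refine ⟨_, _, _, h1, h2, h3, ?_⟩
    ext w
    simp [snAdjk n hn i k hk]

def ex1 (v p q r : Bool) : Bool :=
  (p != v && q == v && r == v) || (p == v && q != v && r == v) || (p == v && q == v && r != v)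

def ori (a p q r a' p' q' r' : Bool) : Bool :=
  (p != a && q' != a') || (q != a && r' != a') || (r != a && p' != a')

set_option synthInstance.maxSize 100000 in
set_option synthInstance.maxHeartbeats 1000000 in
set_option maxRecDepth 100000 in
theorem ori_step : ∀ a p q r, ex1 a p q r = true → ∀ a' p' q' r', ex1 a' p' q' r' = true →
    ∀ p'', ex1 p' a' p'' p = true → ∀ q'', ex1 q' a' q'' q = true →
    ∀ r'', ex1 r' a' r'' r = true → ∀ a'', ex1 a'' p'' q'' r'' = true →
    (ori a p q r a' p' q' r' = ori a' p' q' r' a'' p'' q'' r'' ∧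
     ori a p q r a' p' q' r' = ! ori a p r q a' p' r' q') := by
  decide

theorem no_bool (n : ℕ) (X : ℕ → Fin 4 → Bool)
    (h1 : ∀ i, ex1 (X i 0) (X i 1) (X i 2) (X i 3) = true)
    (h2 : ∀ i, ∀ k ≠ 0, ex1 (X (i+1) k) (X (i+1) 0) (X (i+2) k) (X i k) = true)
    (hn : ∀ k, X n k = X 0 (snSw k)) (hn1 : ∀ k, X (n+1) k = X 1 (snSw k)) : False := by
  have hs := fun i => ori_step _ _ _ _ (h1 i) _ _ _ _ (h1 (i+1)) _ (h2 i 1 (by decide))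
    _ (h2 i 2 (by decide)) _ (h2 i 3 (by decide)) _ (h1 (i+2))
  let O : ℕ → Bool := fun i => ori (X i 0) (X i 1) (X i 2) (X i 3) (X (i+1) 0) (X (i+1) 1)
    (X (i+1) 2) (X (i+1) 3)
  have hc : ∀ i, O i = O 0 := by
    intro i
    induction i with
    | zero => rfl
    | succ i ih => rw [← ih]; exact (hs i).1.symm
  have hO := hc n
  have h0 := (hs 0).2
  simp only [O, hn, hn1] at hO
  simp only [show snSw 0 = 0 from rfl, show snSw 1 = 1 from rfl, show snSw 2 = 3 from rfl,
    show snSw 3 = 2 from rfl, Nat.zero_add] at hO h0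
  rw [h0] at hO
  revert hO
  generalize ori _ _ _ _ _ _ _ _ = b
  cases b <;> decide

open Classical in
theorem ex1_of {V : Type} (G : SimpleGraph V) (S : Finset V) (v p q r : V)
    (h : ∃ w, G.Adj v w ∧ ∀ z, G.Adj v z → ((z ∈ S ↔ v ∉ S) ↔ z = w))
    (hadj : ∀ w, G.Adj v w ↔ w = p ∨ w = q ∨ w = r)
    (h1 : p ≠ q) (h2 : p ≠ r) (h3 : q ≠ r) :
    ex1 (decide (v ∈ S)) (decide (p ∈ S)) (decide (q ∈ S)) (decide (r ∈ S)) = true := by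
  obtain ⟨w, hw, h⟩ := h
  have hp := h p ((hadj p).2 (by simp))
  have hq := h q ((hadj q).2 (by simp))
  have hr := h r ((hadj r).2 (by simp))
  have hw := (hadj w).1 hw
  by_cases a1 : v ∈ S <;> by_cases a2 : p ∈ S <;> by_cases a3 : q ∈ S <;> by_cases a4 : r ∈ S <;>
    simp [a1, a2, a3, a4, ex1] at hp hq hr ⊢ <;> grind

def snL (n : ℕ) (hn : 3 ≤ n) : ℕ → Fin 4 → FV n
  | 0, k => (⟨0, by omega⟩, k)
  | i + 1, k => snNxt (snL n hn i k)

theorem snL_form (n : ℕ) (hn : 3 ≤ n) (i : ℕ) :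
    ∃ j, (∀ k, snL n hn i k = (j, k)) ∨ (∀ k, snL n hn i k = (j, snSw k)) := by
  induction i with
  | zero => exact ⟨_, Or.inl fun k => rfl⟩
  | succ i ih =>
    obtain ⟨j, hj⟩ := ih
    by_cases h : (j : ℕ) + 1 < n
    · refine ⟨⟨j + 1, h⟩, ?_⟩
      rcases hj with hj | hj
      · left; intro k; simp [snL, hj, snNxt, h]
      · right; intro k; simp [snL, hj, snNxt, h]
    · refine ⟨⟨0, by omega⟩, ?_⟩
      rcases hj with hj | hj
      · right; intro k; simp [snL, hj, snNxt, h]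
      · left; intro k; simp [snL, hj, snNxt, h, snSw_sw]

theorem snL_lt (n : ℕ) (hn : 3 ≤ n) (i : ℕ) (hi : i < n) (k : Fin 4) :
    snL n hn i k = (⟨i, hi⟩, k) := by
  induction i with
  | zero => rfl
  | succ i ih => simp [snL, ih (by omega), snNxt, hi]

theorem snL_n (n : ℕ) (hn : 3 ≤ n) (k : Fin 4) : snL n hn n k = snL n hn 0 (snSw k) := by
  obtain ⟨m, rfl⟩ : ∃ m, n = m + 1 := ⟨n - 1, by omega⟩
  simp [snL, snL_lt (m+1) hn m (by omega), snNxt]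

theorem snL_adj0 (n : ℕ) (hn : 3 ≤ n) (i : ℕ) (w : FV n) :
    (flowerSnark n).Adj (snL n hn i 0) w ↔
      w = snL n hn i 1 ∨ w = snL n hn i 2 ∨ w = snL n hn i 3 := by
  obtain ⟨j, hj | hj⟩ := snL_form n hn i
  · simp only [hj, snAdj0]
  · simp only [hj]
    simp only [show snSw 0 = 0 from rfl, show snSw 1 = 1 from rfl, show snSw 2 = 3 from rfl,
      show snSw 3 = 2 from rfl, snAdj0]
    tauto

theorem snL_dist0 (n : ℕ) (hn : 3 ≤ n) (i : ℕ) :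
    snL n hn i 1 ≠ snL n hn i 2 ∧ snL n hn i 1 ≠ snL n hn i 3 ∧
     snL n hn i 2 ≠ snL n hn i 3 := by
  obtain ⟨j, hj | hj⟩ := snL_form n hn i <;> simp [hj, snSw]

theorem snL_adjk (n : ℕ) (hn : 3 ≤ n) (i : ℕ) (k : Fin 4) (hk : k ≠ 0) :
    (∀ w, (flowerSnark n).Adj (snL n hn (i+1) k) w ↔
      w = snL n hn (i+1) 0 ∨ w = snL n hn (i+2) k ∨ w = snL n hn i k) ∧
    snL n hn (i+1) 0 ≠ snL n hn (i+2) k ∧ snL n hn (i+1) 0 ≠ snL n hn i k ∧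
     snL n hn (i+2) k ≠ snL n hn i k := by
  have h2 : snL n hn (i+2) k = snNxt (snL n hn (i+1) k) := rfl
  have h0 : snL n hn i k = snPrv (snL n hn (i+1) k) := (snPrv_nxt _).symm
  obtain ⟨j, hj | hj⟩ := snL_form n hn (i+1)
  · rw [h2, h0, hj k, hj 0]
    exact ⟨snAdjk n hn j k hk, snDist n hn j k hk⟩
  · rw [h2, h0, hj k, hj 0]
    exact ⟨snAdjk n hn j _ (snSw_ne k hk), snDist n hn j _ (snSw_ne k hk)⟩

theorem snL_adj_succ (n : ℕ) (hn : 3 ≤ n) (i : ℕ) (k : Fin 4) (hk : k ≠ 0) :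
    (flowerSnark n).Adj (snL n hn i k) (snL n hn (i+1) k) :=
  (((snL_adjk n hn i k hk).1 _).2 (by simp)).symm

theorem no_eq (n : ℕ) (hn : 3 ≤ n) (ho : Odd n) (S : Finset (FV n)) (A : FV n → Prop)
    (hA : ∀ v w, (flowerSnark n).Adj v w → (A v → A w))
    (h1 : ∀ v, A v → ∀ w, (flowerSnark n).Adj v w → (w ∈ S ↔ v ∉ S))
    (h2 : ∀ v, ¬ A v → ∃ w, (flowerSnark n).Adj v w ∧
      ∀ z, (flowerSnark n).Adj v z → ((z ∈ S ↔ v ∉ S) ↔ z = w)) : False := by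
  classical
  by_cases h0 : A (snL n hn 0 1)
  · have hall : ∀ i, A (snL n hn i 1) := by
      intro i
      induction i with
      | zero => exact h0
      | succ i ih => exact hA _ _ (snL_adj_succ n hn i 1 (by decide)) ih
    have hp : ∀ i, (snL n hn i 1 ∈ S) ↔ (Even i ↔ snL n hn 0 1 ∈ S) := by
      intro i
      induction i with
      | zero => simp
      | succ i ih =>
        rw [h1 _ (hall i) _ (snL_adj_succ n hn i 1 (by decide)), ih, Nat.even_add_one]
        tauto
    have := hp n
    rw [snL_n, ← Nat.not_odd_iff_even] at this
    simp only [show snSw 1 = 1 from rfl] at this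
    tauto
  · have hall : ∀ i, ¬ A (snL n hn i 1) := by
      intro i
      induction i with
      | zero => exact h0
      | succ i ih => exact fun h => ih (hA _ _ (snL_adj_succ n hn i 1 (by decide)).symm h)
    have hall0 : ∀ i, ¬ A (snL n hn i 0) := fun i h =>
      hall i (hA _ _ ((snL_adj0 n hn i _).2 (by simp)) h)
    have hallk : ∀ i k, k ≠ 0 → ¬ A (snL n hn i k) := by
      intro i k hk h
      refine hall0 i (hA _ _ ((snL_adj0 n hn i _).2 ?_).symm h)
      fin_cases k <;> simp at hk ⊢
    have key : ∀ v w, v = w → decide (v ∈ S) = decide (w ∈ S) := by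
      rintro v w rfl; rfl
    refine no_bool n (fun i k => decide (snL n hn i k ∈ S)) ?_ ?_ ?_ ?_
    · intro i
      obtain ⟨d1, d2, d3⟩ := snL_dist0 n hn i
      have := ex1_of _ S _ _ _ _ (h2 _ (hall0 i)) (snL_adj0 n hn i) d1 d2 d3
      convert this
    · intro i k hk
      obtain ⟨d0, d1, d2, d3⟩ := snL_adjk n hn i k hk
      have := ex1_of _ S _ _ _ _ (h2 _ (hallk (i+1) k hk)) d0 d1 d2 d3
      convert this
    · intro k
      exact key _ _ (snL_n n hn k)
    · intro k
      exact key _ _ (congrArg snNxt (snL_n n hn k))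

theorem min_of (n : ℕ) (S : Finset (FV n)) (h : MinimalDominating n (S : Set (FV n))) :
    ∀ s ∈ S, (∀ w, (flowerSnark n).Adj s w → w ∉ S) ∨
      ∃ u, u ∉ S ∧ (flowerSnark n).Adj u s ∧ ∀ w ∈ S, (flowerSnark n).Adj u w → w = s := by
  intro s hs
  have h2 := h.2 ((S : Set (FV n)) \ {s}) ⟨Set.sdiff_subset, fun h' => by
    have := h' (show s ∈ (S : Set (FV n)) by simpa using hs)
    simp at this⟩
  unfold Dominating at h2
  push Not at h2
  obtain ⟨v, hv, hv'⟩ := h2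
  simp only [Set.mem_sdiff, Finset.mem_coe, Set.mem_singleton_iff, not_and, not_not] at hv hv'
  by_cases hvS : v ∈ S
  · left
    have := hv hvS
    subst this
    intro w hw hwS
    exact hv' w ⟨hwS, fun e => by subst e; exact (flowerSnark n).irrefl hw⟩ hw
  · right
    have key : ∀ w ∈ S, (flowerSnark n).Adj v w → w = s := fun w hw ha => by
      by_contra hne
      exact hv' w ⟨hw, hne⟩ ha
    obtain ⟨w, hw, hvw⟩ := h.1 v hvS
    have hw' : w ∈ S := hw
    have := key w hw' hvw
    subst this
    exact ⟨v, hvS, hvw, key⟩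

theorem upper (n : ℕ) (hn : 3 ≤ n) (S : Set (FV n)) (h : MinimalDominating n S) :
    S.ncard ≤ 2 * n ∧ (Odd n → S.ncard ≤ 2 * n - 1) := by
  classical
  obtain ⟨T, rfl⟩ : ∃ T : Finset (FV n), (T : Set (FV n)) = S := ⟨S.toFinset, by simp⟩
  rw [Set.ncard_coe_finset]
  have hm := min_of n T h
  obtain ⟨hb, he⟩ := gen_bound (flowerSnark n) T (fun v => by convert snDeg n hn v) hm
  have hc : T.card + Tᶜ.card = n * 4 := by
    rw [Finset.card_add_card_compl]; simp
  have hc' : T.card + Tᶜ.card = n * 4 := by convert hc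
  have hle : T.card ≤ 2 * n := by
    have : T.card ≤ Tᶜ.card := by convert hb
    omega
  refine ⟨hle, fun ho => ?_⟩
  by_contra hlt
  obtain ⟨e, he⟩ := he (by
    have : T.card = Tᶜ.card := by omega
    convert this)
  obtain ⟨A, h1, h2, h3⟩ := gen_eq _ T hm e he
  exact no_eq n hn ho T A h1 h2 h3

def snS (n : ℕ) : Finset (FV n) :=
  Finset.univ.filter fun v => ((v.1 : ℕ) % 2 = 0 ↔ v.2 = 0)

theorem snS_card (n : ℕ) : (snS n).card = 2 * n - n % 2 := by
  have h : (snS n).card = ∑ i : Fin n, (if (i : ℕ) % 2 = 0 then 1 else 3) := by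
    rw [snS, Finset.card_filter, Fintype.sum_prod_type]
    apply Finset.sum_congr rfl
    intro i _
    rw [Fin.sum_univ_four]
    by_cases h : (i : ℕ) % 2 = 0 <;> simp [h]
  rw [h, Fin.sum_univ_eq_sum_range (fun i => if i % 2 = 0 then 1 else 3)]
  clear h
  induction n with
  | zero => rfl
  | succ n ih =>
    rw [Finset.sum_range_succ, ih]
    split_ifs <;> omega

theorem snS_indep (n : ℕ) (hn : 3 ≤ n) (v w : FV n) (hv : v ∈ snS n) (hw : w ∈ snS n) :
    ¬ (flowerSnark n).Adj v w := by
  have hmod : ∀ m, m < n → (m + 1) % n = if m + 1 < n then m + 1 else 0 := by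
    intro m hm
    split_ifs with h
    · exact Nat.mod_eq_of_lt h
    · have : m + 1 = n := by omega
      rw [this, Nat.mod_self]
  obtain ⟨⟨i, hi⟩, k⟩ := v
  obtain ⟨⟨j, hj⟩, l⟩ := w
  simp only [snS, Finset.mem_filter, Finset.mem_univ, true_and] at hv hw
  simp only [flowerSnark, SimpleGraph.fromRel_adj, ne_eq, hmod i hi, hmod j hj]
  fin_cases k <;> fin_cases l <;> simp at hv hw ⊢ <;> (try split_ifs) <;> omega

theorem snS_dom (n : ℕ) : Dominating n (snS n : Set (FV n)) := by
  rintro ⟨i, k⟩ hv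
  by_cases hk : k = 0
  · subst hk
    refine ⟨(i, 1), ?_, (snAdj0 n i _).2 (by simp)⟩
    simp [snS] at hv ⊢
    exact hv
  · refine ⟨(i, 0), ?_, ((snAdj0 n i _).2 ?_).symm⟩
    · simp [snS, hk] at hv ⊢
      exact hv
    · fin_cases k <;> simp at hk ⊢

theorem snS_min (n : ℕ) (hn : 3 ≤ n) : MinimalDominating n (snS n : Set (FV n)) := by
  refine ⟨snS_dom n, fun T hT hd => ?_⟩
  obtain ⟨v, hv, hvT⟩ := Set.exists_of_ssubset hT
  obtain ⟨w, hw, hvw⟩ := hd v hvT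
  exact snS_indep n hn v w hv (hT.1 hw) hvw



/-- For every `n ≥ 3`, the upper domination number of the flower snark `J_n`
equals `2n` if `n` is even, and `2n - 1` if `n` is odd. -/
theorem flowerSnark_upperDomination (n : ℕ) (hn : 3 ≤ n) :
    (Even n → upperDominationNumber n = 2 * n) ∧
    (Odd n → upperDominationNumber n = 2 * n - 1) := by
  have hbdd : BddAbove {k | ∃ S : Set (FV n), MinimalDominating n S ∧ S.ncard = k} := by
    refine ⟨2 * n, ?_⟩
    rintro k ⟨S, hS, rfl⟩
    exact (upper n hn S hS).1
  have hlow : 2 * n - n % 2 ≤ upperDominationNumber n := by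
    refine le_csSup hbdd ⟨_, snS_min n hn, ?_⟩
    rw [Set.ncard_coe_finset, snS_card]
  have hne : {k | ∃ S : Set (FV n), MinimalDominating n S ∧ S.ncard = k}.Nonempty :=
    ⟨_, _, snS_min n hn, rfl⟩
  constructor
  · intro he
    apply le_antisymm
    · refine csSup_le hne ?_
      rintro k ⟨S, hS, rfl⟩
      exact (upper n hn S hS).1
    · have := Nat.even_iff.1 he
      omega
  · intro ho
    apply le_antisymm
    · refine csSup_le hne ?_
      rintro k ⟨S, hS, rfl⟩
      exact (upper n hn S hS).2 ho
    · have := Nat.odd_iff.1 ho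
      omega
end

section
/- For every integer n ≥ 3, the 2-domination number of the flower snark J_n equals ⌈5n/3⌉ if n is not congruent to 1 mod 3, and equals (5n+4)/3 if n is congruent to 1 mod 3. -/
open Classical in
/-- indicator of `S` on column `m mod n`. -/
noncomputable def ind {n : ℕ} (h : 0 < n) (S : Set (FV n)) (m : ℕ) (j : Fin 4) : ℕ :=
  if ((⟨m % n, Nat.mod_lt _ h⟩ : Fin n), j) ∈ S then 1 else 0

noncomputable def colw {n : ℕ} (h : 0 < n) (S : Set (FV n)) (m : ℕ) : ℕ :=
  ind h S m 0 + ind h S m 1 + ind h S m 2 + ind h S m 3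

def tw (p : Prop) [Decidable p] (j : Fin 4) : Fin 4 :=
  if p then (if j = 2 then 3 else if j = 3 then 2 else j) else j

lemma ind_le {n : ℕ} (h : 0 < n) (S : Set (FV n)) (m : ℕ) (j : Fin 4) : ind h S m j ≤ 1 := by
  unfold ind; split_ifs <;> simp

lemma colw_tw {n : ℕ} (h : 0 < n) (S : Set (FV n)) (m : ℕ) (p : Prop) [Decidable p] :
    colw h S m = ind h S m 0 + ind h S m (tw p 1) + ind h S m (tw p 2) + ind h S m (tw p 3) := by
  unfold colw
  by_cases hp : p
  · have e1 : tw p 1 = 1 := by simp [tw]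
    have e2 : tw p 2 = 3 := by simp [tw, hp]
    have e3 : tw p 3 = 2 := by simp [tw, hp]
    rw [e1, e2, e3]; omega
  · have e : ∀ j, tw p j = j := by intro j; simp [tw, hp]
    rw [e, e, e]

lemma colw_per {n : ℕ} (h : 0 < n) (S : Set (FV n)) (k : ℕ) :
    colw h S (k + n) = colw h S k := by
  have e : (⟨(k + n) % n, Nat.mod_lt _ h⟩ : Fin n) = ⟨k % n, Nat.mod_lt _ h⟩ :=
    Fin.ext (Nat.add_mod_right k n)
  unfold colw ind
  rw [e]

lemma ncard_eq {n : ℕ} (h : 0 < n) (S : Set (FV n)) :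
    S.ncard = ∑ m ∈ Finset.range n, colw h S m := by
  classical
  rw [Set.ncard_eq_toFinset_card' S]
  have : S.toFinset = Finset.univ.filter (fun v => v ∈ S) := by ext; simp
  rw [this, Finset.card_filter, Fintype.sum_prod_type, Finset.sum_range]
  apply Finset.sum_congr rfl
  intro i _
  rw [Fin.sum_univ_four]
  simp only [colw, ind, Nat.mod_eq_of_lt i.2]

lemma mod_succ_cases {n : ℕ} (hn : 3 ≤ n) (m : ℕ) :
    ((m % n = n - 1 ∧ (m+1) % n = 0) ∨ (m % n < n - 1 ∧ (m+1) % n = m % n + 1)) := by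
  have h1 : m % n < n := Nat.mod_lt _ (by omega)
  have h2 : (m+1) % n = (m % n + 1) % n := by simp
  rcases Nat.lt_or_ge (m % n) (n-1) with h | h
  · right; refine ⟨h, ?_⟩; rw [h2]; exact Nat.mod_eq_of_lt (by omega)
  · left; have : m % n + 1 = n := by omega
    rw [h2, this]; simp; omega

lemma nbr {n : ℕ} (hn : 3 ≤ n) (m : ℕ) (j : Fin 4) (hj : j ≠ 0) (w : FV n)
    (hw : (flowerSnark n).Adj (⟨(m+1) % n, Nat.mod_lt _ (by omega)⟩, j) w) :
    w = (⟨(m+1) % n, Nat.mod_lt _ (by omega)⟩, 0) ∨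
    w = (⟨m % n, Nat.mod_lt _ (by omega)⟩, tw ((m+1) % n = 0) j) ∨
    w = (⟨(m+2) % n, Nat.mod_lt _ (by omega)⟩, tw ((m+2) % n = 0) j) := by
  obtain ⟨⟨i, hi⟩, k⟩ := w
  have c1 := mod_succ_cases hn m
  have c2 := mod_succ_cases hn (m+1)
  have c3 := mod_succ_cases hn i
  rw [Nat.mod_eq_of_lt hi] at c3
  simp only [flowerSnark, SimpleGraph.fromRel_adj, Fin.mk.injEq, Prod.mk.injEq, ne_eq] at hw ⊢
  obtain ⟨_, hw⟩ := hw
  rw [show m + 1 + 1 = m + 2 from rfl] at c2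
  have c4 : ((m+1) % n + 1) % n = (m+2) % n := by simp
  rw [c4] at hw
  generalize m % n = x at *
  generalize (m+1) % n = y at *
  generalize (m+2) % n = z at *
  generalize (i+1) % n = i' at *
  unfold tw
  fin_cases j <;> fin_cases k <;> simp at hw hj ⊢ <;> (try split_ifs) <;> (try simp) <;> omega

lemma dom {n : ℕ} (hn : 3 ≤ n) (S : Set (FV n)) (hS : TwoDominating n S) (m : ℕ) (j : Fin 4)
    (hj : j ≠ 0) (h : 0 < n) :
    2 ≤ 2 * ind h S (m+1) j + ind h S (m+1) 0 + ind h S m (tw ((m+1) % n = 0) j)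
      + ind h S (m+2) (tw ((m+2) % n = 0) j) := by
  by_cases hv : ((⟨(m+1) % n, Nat.mod_lt _ h⟩ : Fin n), j) ∈ S
  · have : ind h S (m+1) j = 1 := by simp [ind, hv]
    omega
  obtain ⟨w₁, h1, w₂, h2, hne, a1, a2⟩ := hS _ hv
  have n1 := nbr hn m j hj w₁ a1
  have n2 := nbr hn m j hj w₂ a2
  rcases n1 with rfl | rfl | rfl <;> rcases n2 with rfl | rfl | rfl <;>
    first
    | exact absurd rfl hne
    | (simp only [ind, h1, h2, if_true]; omega)

lemma dom0 {n : ℕ} (S : Set (FV n)) (hS : TwoDominating n S) (m : ℕ) (h : 0 < n) :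
    2 ≤ 2 * ind h S m 0 + ind h S m 1 + ind h S m 2 + ind h S m 3 := by
  by_cases hv : ((⟨m % n, Nat.mod_lt _ h⟩ : Fin n), (0 : Fin 4)) ∈ S
  · have : ind h S m 0 = 1 := by simp [ind, hv]
    omega
  obtain ⟨w₁, h1, w₂, h2, hne, a1, a2⟩ := hS _ hv
  have key : ∀ w : FV n, (flowerSnark n).Adj (⟨m % n, Nat.mod_lt _ h⟩, 0) w →
      w = (⟨m % n, Nat.mod_lt _ h⟩, 1) ∨ w = (⟨m % n, Nat.mod_lt _ h⟩, 2) ∨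
      w = (⟨m % n, Nat.mod_lt _ h⟩, 3) := by
    rintro ⟨i, k⟩ hw
    simp only [flowerSnark, SimpleGraph.fromRel_adj, Prod.mk.injEq] at hw ⊢
    obtain ⟨_, hw⟩ := hw
    fin_cases k <;> simp at hw ⊢ <;> exact hw.symm
  rcases key _ a1 with rfl | rfl | rfl <;> rcases key _ a2 with rfl | rfl | rfl <;>
    first
    | exact absurd rfl hne
    | (simp only [ind, h1, h2, if_true]; omega)

lemma colw_pos {n : ℕ} (S : Set (FV n)) (hS : TwoDominating n S) (m : ℕ) (h : 0 < n) :
    1 ≤ colw h S m := by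
  have := dom0 S hS m h
  unfold colw; omega

lemma has_a_left {n : ℕ} (hn : 3 ≤ n) (S : Set (FV n)) (hS : TwoDominating n S) (m : ℕ) (h : 0 < n)
    (h1 : colw h S (m+2) ≤ 1) (h2 : colw h S (m+1) ≤ 2) : 1 ≤ ind h S (m+1) 0 := by
  by_contra hc
  have q := colw_tw h S (m+2) ((m+2) % n = 0)
  have d0 := dom0 S hS (m+2) h
  have e0 := dom0 S hS (m+1) h
  have d1 := dom hn S hS m 1 (by decide) h
  have d2 := dom hn S hS m 2 (by decide) h
  have d3 := dom hn S hS m 3 (by decide) h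
  have b1 := ind_le h S m (tw ((m+1) % n = 0) 1)
  have b2 := ind_le h S m (tw ((m+1) % n = 0) 2)
  have b3 := ind_le h S m (tw ((m+1) % n = 0) 3)
  have b4 := ind_le h S (m+2) 0
  unfold colw at *
  omega

lemma has_a_right {n : ℕ} (hn : 3 ≤ n) (S : Set (FV n)) (hS : TwoDominating n S) (m : ℕ) (h : 0 < n)
    (h1 : colw h S m ≤ 1) (h2 : colw h S (m+1) ≤ 2) : 1 ≤ ind h S (m+1) 0 := by
  by_contra hc
  have q := colw_tw h S m ((m+1) % n = 0)
  have d0 := dom0 S hS m h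
  have e0 := dom0 S hS (m+1) h
  have d1 := dom hn S hS m 1 (by decide) h
  have d2 := dom hn S hS m 2 (by decide) h
  have d3 := dom hn S hS m 3 (by decide) h
  have b1 := ind_le h S (m+2) (tw ((m+2) % n = 0) 1)
  have b2 := ind_le h S (m+2) (tw ((m+2) % n = 0) 2)
  have b3 := ind_le h S (m+2) (tw ((m+2) % n = 0) 3)
  have b4 := ind_le h S m 0
  unfold colw at *
  omega

lemma L2' {n : ℕ} (hn : 3 ≤ n) (S : Set (FV n)) (hS : TwoDominating n S) (m : ℕ) (h : 0 < n)
    (h1 : colw h S (m+2) ≤ 1) : 3 ≤ colw h S (m+1) ∨ 3 ≤ colw h S (m+3) := by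
  by_contra hc
  push Not at hc
  have l := has_a_left hn S hS m h h1 (by omega)
  have r := has_a_right hn S hS (m+2) h h1 (by rw [show m + 2 + 1 = m + 3 from rfl]; omega)
  have p := colw_tw h S (m+1) ((m+2) % n = 0)
  have q := colw_tw h S (m+3) ((m+3) % n = 0)
  have d0 := dom0 S hS (m+2) h
  have d1 := dom hn S hS (m+1) 1 (by decide) h
  have d2 := dom hn S hS (m+1) 2 (by decide) h
  have d3 := dom hn S hS (m+1) 3 (by decide) h
  have b := ind_le h S (m+2) 0
  simp only [add_assoc, Nat.reduceAdd] at *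
  unfold colw at *
  omega

lemma L2 {n : ℕ} (hn : 3 ≤ n) (S : Set (FV n)) (hS : TwoDominating n S) (m : ℕ) (h : 0 < n)
    (h1 : colw h S (m+1) ≤ 1) : 3 ≤ colw h S m ∨ 3 ≤ colw h S (m+2) := by
  have := L2' hn S hS (m + n - 1) h
  rw [show m + n - 1 + 2 = (m + 1) + n by omega, show m + n - 1 + 1 = m + n by omega,
    show m + n - 1 + 3 = (m + 2) + n by omega, colw_per, colw_per, colw_per] at this
  exact this h1

lemma L1 {n : ℕ} (hn : 3 ≤ n) (S : Set (FV n)) (hS : TwoDominating n S) (m : ℕ) (h : 0 < n) :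
    5 ≤ colw h S m + colw h S (m+1) + colw h S (m+2) := by
  have a := colw_pos S hS m h
  have b := colw_pos S hS (m+1) h
  have c := colw_pos S hS (m+2) h
  rcases Nat.lt_or_ge (colw h S (m+1)) 2 with hb | hb
  · have := L2 hn S hS m h (by omega)
    omega
  by_contra hc
  have ha1 : colw h S m = 1 := by omega
  have hc1 : colw h S (m+2) = 1 := by omega
  have p := colw_tw h S m ((m+1) % n = 0)
  have q := colw_tw h S (m+2) ((m+2) % n = 0)
  have d0 := dom0 S hS (m+1) h
  have e0 := dom0 S hS m h
  have f0 := dom0 S hS (m+2) h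
  have d1 := dom hn S hS m 1 (by decide) h
  have d2 := dom hn S hS m 2 (by decide) h
  have d3 := dom hn S hS m 3 (by decide) h
  have := ind_le h S (m+1) 0
  unfold colw at *
  omega

lemma W_shift {n : ℕ} (h : 0 < n) (S : Set (FV n)) (i : ℕ) :
    ∑ m ∈ Finset.range n, colw h S (i + m) = S.ncard := by
  induction i with
  | zero => simp [ncard_eq h]
  | succ i ih =>
    rw [← ih]
    have e1 := Finset.sum_range_succ (fun m => colw h S (i + m)) n
    have e2 := Finset.sum_range_succ' (fun m => colw h S (i + m)) n
    have e3 : colw h S (i + n) = colw h S (i + 0) := colw_per h S i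
    have e4 : ∀ m, i + 1 + m = i + (m + 1) := by intro m; omega
    simp only [e4]
    omega

lemma triples (u : ℕ → ℕ) (hu : ∀ m, 5 ≤ u m + u (m+1) + u (m+2)) (i k : ℕ) :
    5 * k ≤ ∑ m ∈ Finset.range (3 * k), u (i + m) := by
  induction k with
  | zero => simp
  | succ k ih =>
    rw [show 3 * (k+1) = 3 * k + 1 + 1 + 1 by ring, Finset.sum_range_succ, Finset.sum_range_succ,
      Finset.sum_range_succ]
    have := hu (i + 3 * k)
    simp only [← add_assoc] at *
    omega

lemma lower3 {n : ℕ} (hn : 3 ≤ n) (S : Set (FV n)) (hS : TwoDominating n S) :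
    5 * n ≤ 3 * S.ncard := by
  have h : 0 < n := by omega
  have e0 := W_shift h S 0
  have e1 := W_shift h S 1
  have e2 := W_shift h S 2
  have : ∑ m ∈ Finset.range n, 5 ≤ ∑ m ∈ Finset.range n,
      (colw h S (0+m) + colw h S (1+m) + colw h S (2+m)) := by
    apply Finset.sum_le_sum
    intro m _
    have := L1 hn S hS m h
    rw [show 0 + m = m by omega, show 1 + m = m + 1 by omega, show 2 + m = m + 2 by omega]
    exact this
  rw [Finset.sum_add_distrib, Finset.sum_add_distrib, e0, e1, e2] at this
  simp at this
  omega

lemma lower1 {n : ℕ} (hn : 3 ≤ n) (S : Set (FV n)) (hS : TwoDominating n S) (k : ℕ)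
    (hk : n = 3 * k + 1) : 5 * k + 3 ≤ S.ncard := by
  have h : 0 < n := by omega
  by_contra hc
  have le2 : ∀ i, colw h S i ≤ 2 := by
    intro i
    have e := W_shift h S i
    have t := triples (colw h S) (fun m => L1 hn S hS m h) (i+1) k
    rw [show Finset.range n = Finset.range (3 * k + 1) by rw [hk], Finset.sum_range_succ'] at e
    simp only [add_assoc, add_comm 1, add_zero] at *
    omega
  have ge2 : ∀ i, 2 ≤ colw h S (1 + i) := by
    intro i
    by_contra hi
    rw [add_comm] at hi
    have := L2 hn S hS i h (by omega)
    have := le2 i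
    have := le2 (i+2)
    omega
  have : ∑ m ∈ Finset.range n, 2 ≤ ∑ m ∈ Finset.range n, colw h S (1+m) :=
    Finset.sum_le_sum (fun m _ => ge2 m)
  rw [W_shift] at this
  simp at this
  omega

/-- the extremal set -/
def ext2 (n : ℕ) : Set (FV n) :=
  {v | if ((v.1 : ℕ) % 3 = 2 ∨ (v.1 : ℕ) = n - 1) then v.2 ≠ 0 else v.2 = 0}

lemma ext2_dom {n : ℕ} (hn : 3 ≤ n) : TwoDominating n (ext2 n) := by
  rintro ⟨⟨i, hi⟩, j⟩ hv
  by_cases c : i % 3 = 2 ∨ i = n - 1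
  · have hj : j = 0 := by simpa [ext2, c] using hv
    subst hj
    refine ⟨(⟨i, hi⟩, 1), by simp [ext2, c], (⟨i, hi⟩, 2), by simp [ext2, c], by simp, ?_, ?_⟩ <;>
      simp [flowerSnark]
  · have hj : j ≠ 0 := by simpa [ext2, c] using hv
    have c' := c
    push Not at c'
    by_cases c0 : i % 3 = 0
    · by_cases i0 : i = 0
      · subst i0
        refine ⟨(⟨0, hi⟩, 0), by simp [ext2, c]; omega, (⟨n-1, by omega⟩, tw True j), ?_, ?_, ?_, ?_⟩
        · fin_cases j <;> simp [ext2, tw] at hj ⊢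
        · simp; omega
        · simp [flowerSnark, hj]
        · have : (n - 1 + 1) % n = 0 := by rw [Nat.sub_add_cancel (by omega)]; simp
          fin_cases j <;> simp [flowerSnark, tw, this] at hj ⊢ <;> omega
      · refine ⟨(⟨i, hi⟩, 0), by simp [ext2, c], (⟨i-1, by omega⟩, j), ?_, ?_, ?_, ?_⟩
        · have : (i - 1) % 3 = 2 := by omega
          simp [ext2, this, hj]
        · simp; omega
        · simp [flowerSnark, hj]
        · have : (i - 1 + 1) % n = i := by
            rw [Nat.sub_add_cancel (by omega), Nat.mod_eq_of_lt hi]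
          fin_cases j <;> simp [flowerSnark, this] at hj ⊢ <;> omega
    · refine ⟨(⟨i, hi⟩, 0), by simp [ext2, c], (⟨i+1, by omega⟩, j), ?_, ?_, ?_, ?_⟩
      · have : (i + 1) % 3 = 2 := by omega
        simp [ext2, this, hj]
      · simp
      · simp [flowerSnark, hj]
      · have : (i + 1) % n = i + 1 := Nat.mod_eq_of_lt (by omega)
        fin_cases j <;> simp [flowerSnark, this] at hj ⊢

lemma sum_pat (k : ℕ) : ∑ m ∈ Finset.range (3 * k), (if m % 3 = 2 then 3 else 1) = 5 * k := by
  induction k with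
  | zero => simp
  | succ k ih =>
    rw [show 3 * (k+1) = 3 * k + 1 + 1 + 1 by ring, Finset.sum_range_succ, Finset.sum_range_succ,
      Finset.sum_range_succ, ih]
    rw [if_neg (by omega), if_neg (by omega), if_pos (by omega)]
    ring

lemma ext2_card {n : ℕ} (hn : 3 ≤ n) :
    (ext2 n).ncard = 5 * (n / 3) + (if n % 3 = 0 then 0 else if n % 3 = 1 then 3 else 4) := by
  have h : 0 < n := by omega
  have e : (ext2 n).ncard = ∑ m ∈ Finset.range n, (if m % 3 = 2 ∨ m = n - 1 then 3 else 1) := by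
    rw [ncard_eq h]
    apply Finset.sum_congr rfl
    intro m hm
    have hm' : m % n = m := Nat.mod_eq_of_lt (Finset.mem_range.1 hm)
    by_cases c : m % 3 = 2 ∨ m = n - 1
    · simp [colw, ind, ext2, hm', c]
    · simp [colw, ind, ext2, hm', c]
  rw [e]
  obtain ⟨k, hk⟩ : ∃ k, n / 3 = k := ⟨_, rfl⟩
  rw [hk]
  have base : ∀ m ∈ Finset.range (3 * k), (if m % 3 = 2 ∨ m = n - 1 then 3 else 1)
      = (if m % 3 = 2 then 3 else 1) := by
    intro m hm
    have := Finset.mem_range.1 hm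
    congr 1
    simp only [eq_iff_iff]
    omega
  have b2 := (Finset.sum_congr rfl base).trans (sum_pat k)
  have h3 : n % 3 = 0 ∨ n % 3 = 1 ∨ n % 3 = 2 := by omega
  rcases h3 with h3 | h3 | h3
  · rw [show Finset.range n = Finset.range (3 * k) by congr 1; omega, b2]; simp [h3]
  · rw [show Finset.range n = Finset.range (3 * k + 1) by congr 1; omega, Finset.sum_range_succ, b2,
      if_pos (by omega)]; simp [h3]
  · rw [show Finset.range n = Finset.range (3 * k + 1 + 1) by congr 1; omega,
      Finset.sum_range_succ, Finset.sum_range_succ, b2,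
      if_neg (by omega), if_pos (by omega)]; simp [h3]

lemma two_dom_eq {n : ℕ} (hn : 3 ≤ n) :
    twoDominationNumber n
      = 5 * (n / 3) + (if n % 3 = 0 then 0 else if n % 3 = 1 then 3 else 4) := by
  apply le_antisymm
  · exact Nat.sInf_le ⟨ext2 n, ext2_dom hn, ext2_card hn⟩
  · refine le_csInf ⟨(ext2 n).ncard, ext2 n, ext2_dom hn, rfl⟩ ?_
    rintro _ ⟨S, hS, rfl⟩
    have l3 := lower3 hn S hS
    have l1 := fun hh => lower1 hn S hS (n / 3) hh
    split_ifs
    · omega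
    · have := l1 (by omega); omega
    · omega

/-- For every `n ≥ 3`, the 2-domination number of the flower snark `J_n` equals
`⌈5n/3⌉` if `n ≢ 1 (mod 3)`, and `(5n+4)/3` if `n ≡ 1 (mod 3)`. -/
theorem flowerSnark_twoDomination (n : ℕ) (hn : 3 ≤ n) :
    (n % 3 ≠ 1 → (twoDominationNumber n : ℤ) = ⌈(5 * (n : ℚ)) / 3⌉) ∧
    (n % 3 = 1 → (twoDominationNumber n : ℚ) = (5 * n + 4) / 3) := by
  rw [two_dom_eq hn]
  obtain ⟨k, hk⟩ : ∃ k, n / 3 = k := ⟨_, rfl⟩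
  rw [hk]
  constructor
  · intro h
    symm
    rw [Int.ceil_eq_iff]
    have h3 : n % 3 = 0 ∨ n % 3 = 2 := by omega
    rcases h3 with h3 | h3
    · have : n = 3 * k := by omega
      rw [h3, this]; push_cast; constructor <;> norm_num <;> linarith
    · have : n = 3 * k + 2 := by omega
      rw [h3, this]; push_cast; constructor <;> norm_num <;> linarith
  · intro h
    have : n = 3 * k + 1 := by omega
    rw [h, this]; norm_num; ring
end

section
/- For every integer n ≥ 3, the total domination number of the flower snark J_n equals ⌈3n/2⌉ if n is not congruent to 2 mod 4, and equals 3n/2 + 1 if n is congruent to 2 mod 4. -/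
lemma fs_ext {n : ℕ} (i j : Fin n) : i = j ↔ (i : ℕ) = (j : ℕ) := Fin.ext_iff

lemma fs_val_succ (n : ℕ) [NeZero n] (hn : 3 ≤ n) (i : Fin n) :
    ((i + 1 : Fin n) : ℕ) = if (i : ℕ) + 1 = n then 0 else (i : ℕ) + 1 := by
  have h1 : (1 % n) = 1 := Nat.mod_eq_of_lt (by omega)
  rw [Fin.val_add, Fin.val_one', h1]
  have := i.2
  split_ifs with h
  · rw [h, Nat.mod_self]
  · exact Nat.mod_eq_of_lt (by omega)

lemma fs_mod (n : ℕ) (i : ℕ) (hi : i < n) :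
    (i + 1) % n = if i + 1 = n then 0 else i + 1 := by
  split_ifs with h
  · rw [h, Nat.mod_self]
  · exact Nat.mod_eq_of_lt (by omega)

lemma fs_nbr_b (n : ℕ) (hn : 3 ≤ n) (p m q : Fin n)
    (hm : (m : ℕ) = if (p : ℕ) + 1 = n then 0 else (p : ℕ) + 1)
    (hq : (q : ℕ) = if (m : ℕ) + 1 = n then 0 else (m : ℕ) + 1)
    (w : FV n) (h : (flowerSnark n).Adj (m, 1) w) :
    w = (m, 0) ∨ w = (p, 1) ∨ w = (q, 1) := by
  obtain ⟨j, t⟩ := w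
  have h1 := fs_mod n m m.2
  have h2 := fs_mod n j j.2
  have := p.2
  have := j.2
  fin_cases t <;> simp [flowerSnark, SimpleGraph.fromRel_adj, fs_ext (n := n), -Fin.val_eq_zero_iff, h1, h2] at h ⊢ <;>
    split_ifs at * <;> omega

lemma fs_nbr_c (n : ℕ) (hn : 3 ≤ n) (p m q : Fin n)
    (hm : (m : ℕ) = if (p : ℕ) + 1 = n then 0 else (p : ℕ) + 1)
    (hq : (q : ℕ) = if (m : ℕ) + 1 = n then 0 else (m : ℕ) + 1)
    (w : FV n) (h : (flowerSnark n).Adj (m, 2) w) :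
    w = (m, 0) ∨ w = (p, if (m : ℕ) = 0 then 3 else 2) ∨ w = (q, if (q : ℕ) = 0 then 3 else 2) := by
  obtain ⟨j, t⟩ := w
  have := p.2
  have := j.2
  have := m.2
  by_cases hm0 : (m : ℕ) = 0 <;> by_cases hq0 : (q : ℕ) = 0 <;> fin_cases t <;>
    simp [flowerSnark, SimpleGraph.fromRel_adj, fs_ext (n := n), -Fin.val_eq_zero_iff, hm0, hq0] at h ⊢ <;>
    split_ifs at * <;> omega

lemma fs_nbr_d (n : ℕ) (hn : 3 ≤ n) (p m q : Fin n)
    (hm : (m : ℕ) = if (p : ℕ) + 1 = n then 0 else (p : ℕ) + 1)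
    (hq : (q : ℕ) = if (m : ℕ) + 1 = n then 0 else (m : ℕ) + 1)
    (w : FV n) (h : (flowerSnark n).Adj (m, 3) w) :
    w = (m, 0) ∨ w = (p, if (m : ℕ) = 0 then 2 else 3) ∨ w = (q, if (q : ℕ) = 0 then 2 else 3) := by
  obtain ⟨j, t⟩ := w
  have := p.2
  have := j.2
  have := m.2
  by_cases hm0 : (m : ℕ) = 0 <;> by_cases hq0 : (q : ℕ) = 0 <;> fin_cases t <;>
    simp [flowerSnark, SimpleGraph.fromRel_adj, fs_ext (n := n), -Fin.val_eq_zero_iff, hm0, hq0] at h ⊢ <;>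
    split_ifs at * <;> omega

lemma fs_nbr_a (n : ℕ) (m : Fin n) (w : FV n) (h : (flowerSnark n).Adj (m, 0) w) :
    w = (m, 1) ∨ w = (m, 2) ∨ w = (m, 3) := by
  obtain ⟨j, t⟩ := w
  fin_cases t <;> simp [flowerSnark, SimpleGraph.fromRel_adj, fs_ext (n := n), -Fin.val_eq_zero_iff] at h ⊢ <;> omega

open Classical in
/-- indicator of `S` -/
noncomputable def fsInd {n : ℕ} (S : Set (FV n)) (v : FV n) : ℕ := if v ∈ S then 1 else 0

lemma fsInd_mem {n : ℕ} {S : Set (FV n)} {v : FV n} (h : v ∈ S) : fsInd S v = 1 := by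
  simp [fsInd, h]

lemma fs_ncard {n : ℕ} (S : Set (FV n)) :
    S.ncard = ∑ i : Fin n, (fsInd S (i, 0) + fsInd S (i, 1) + fsInd S (i, 2) + fsInd S (i, 3)) := by
  classical
  have : S.ncard = ∑ v : FV n, fsInd S v := by
    rw [Set.ncard_eq_toFinset_card' S, Finset.card_eq_sum_ones]
    simp only [fsInd]
    rw [← Finset.sum_filter]
    apply Finset.sum_congr _ (fun _ _ => rfl)
    ext v; simp
  rw [this, Fintype.sum_prod_type]
  simp [Fin.sum_univ_four]

section
variable {n : ℕ} [NeZero n] {S : Set (FV n)}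

lemma fs_local_b (hn : 3 ≤ n) (hS : TotalDominating n S) (i : Fin n) :
    1 ≤ fsInd S (i+1, 0) + fsInd S (i, 1) + fsInd S (i+1+1, 1) := by
  obtain ⟨w, hw, ha⟩ := hS (i+1, 1)
  rcases fs_nbr_b n hn i (i+1) (i+1+1) (fs_val_succ n hn _) (fs_val_succ n hn _) w ha with
    rfl | rfl | rfl <;> rw [fsInd_mem hw] <;> omega

lemma fs_local_a (hS : TotalDominating n S) (i : Fin n) :
    1 ≤ fsInd S (i, 1) + fsInd S (i, 2) + fsInd S (i, 3) := by
  obtain ⟨w, hw, ha⟩ := hS (i, 0)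
  rcases fs_nbr_a n i w ha with rfl | rfl | rfl <;> rw [fsInd_mem hw] <;> omega

lemma fs_local_cd (hn : 3 ≤ n) (hS : TotalDominating n S) (i : Fin n) :
    2 ≤ 2 * fsInd S (i+1, 0) + fsInd S (i, 2) + fsInd S (i, 3) + fsInd S (i+1+1, 2)
      + fsInd S (i+1+1, 3) := by
  obtain ⟨w, hw, ha⟩ := hS (i+1, 2)
  obtain ⟨w', hw', ha'⟩ := hS (i+1, 3)
  have h1 := fs_nbr_c n hn i (i+1) (i+1+1) (fs_val_succ n hn _) (fs_val_succ n hn _) w ha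
  have h2 := fs_nbr_d n hn i (i+1) (i+1+1) (fs_val_succ n hn _) (fs_val_succ n hn _) w' ha'
  split_ifs at h1 h2 <;> rcases h1 with rfl | rfl | rfl <;> rcases h2 with rfl | rfl | rfl <;>
    have e1 := fsInd_mem hw <;> have e2 := fsInd_mem hw' <;> omega

lemma fs_local (hn : 3 ≤ n) (hS : TotalDominating n S) (i : Fin n) :
    3 ≤ fsInd S (i+1, 0) + (fsInd S (i, 1) + fsInd S (i, 2) + fsInd S (i, 3)) +
      (fsInd S (i+1+1, 1) + fsInd S (i+1+1, 2) + fsInd S (i+1+1, 3)) := by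
  have h1 := fs_local_b hn hS i
  have h2 := fs_local_cd hn hS i
  have h3 := fs_local_a hS i
  have h4 := fs_local_a hS (i+1+1)
  have h5 : fsInd S (i+1, 0) ≤ 1 := by unfold fsInd; split_ifs <;> omega
  omega

lemma fs_sum :
    2 * S.ncard = ∑ i : Fin n, (fsInd S (i+1, 0) +
      (fsInd S (i, 1) + fsInd S (i, 2) + fsInd S (i, 3)) +
      (fsInd S (i+1+1, 1) + fsInd S (i+1+1, 2) + fsInd S (i+1+1, 3)) + fsInd S (i+1, 0)) := by
  have e : ∀ g : Fin n → ℕ, ∑ i, g (i+1) = ∑ i, g i := fun g =>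
    Equiv.sum_comp (Equiv.addRight (1 : Fin n)) g
  have e2 : ∀ g : Fin n → ℕ, ∑ i, g (i+1+1) = ∑ i, g i := fun g => by
    rw [e (fun i => g (i+1)), e]
  rw [fs_ncard]
  simp only [Finset.sum_add_distrib]
  rw [e (fun i => fsInd S (i, 0)), e2 (fun i => fsInd S (i, 1)), e2 (fun i => fsInd S (i, 2)),
    e2 (fun i => fsInd S (i, 3))]
  ring

lemma fs_lower_s3 (hn : 3 ≤ n) (hS : TotalDominating n S) : 3 * n ≤ 2 * S.ncard := by
  rw [fs_sum]
  calc 3 * n = ∑ i : Fin n, 3 := by simp [mul_comm]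
    _ ≤ _ := Finset.sum_le_sum fun i _ => by have := fs_local hn hS i; omega

lemma fs_lower2 (hn : 3 ≤ n) (hS : TotalDominating n S) (h4 : n % 4 = 2) :
    3 * n < 2 * S.ncard := by
  refine lt_of_le_of_ne (fs_lower_s3 hn hS) fun heq => ?_
  rw [fs_sum] at heq
  have h3 : ∑ i : Fin n, 3 = 3 * n := by simp [mul_comm]
  rw [← h3] at heq
  have key := (Finset.sum_eq_sum_iff_of_le (fun i _ => by
    have := fs_local hn hS i; omega)).1 heq
  have hb : ∀ i : Fin n, fsInd S (i, 1) + fsInd S (i+1+1, 1) = 1 := by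
    intro i
    have h0 := key i (Finset.mem_univ _)
    have h1 := fs_local_b hn hS i
    have h2 := fs_local_cd hn hS i
    have h3 := fs_local hn hS i
    omega
  obtain ⟨c, hc, hs⟩ : ∃ c : ℕ → Fin n, c n = c 0 ∧ ∀ k, c (k + 1) = c k + 1 := by
    refine ⟨fun k => ⟨k % n, Nat.mod_lt _ (by omega)⟩, by simp, fun k => ?_⟩
    apply Fin.ext
    simp [Fin.val_add]
  have hg : ∀ k, fsInd S (c k, 1) + fsInd S (c (k + 1 + 1), 1) = 1 := by
    intro k; rw [hs, hs]; exact hb _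
  have h2 : ∀ k : ℕ, fsInd S (c (4 * k), 1) = fsInd S (c 0, 1) := by
    intro k
    induction k with
    | zero => rfl
    | succ k ih =>
      have a1 := hg (4 * k)
      have a2 := hg (4 * k + 1 + 1)
      have : 4 * (k+1) = 4 * k + 1 + 1 + 1 + 1 := by ring
      rw [this]; omega
  have a1 := hg (4 * (n / 4))
  have e : 4 * (n / 4) + 1 + 1 = n := by omega
  rw [e, h2, hc] at a1
  omega

end

/-- columns that contain `c, d` -/
def fsC (n i : ℕ) : Prop :=
  (i < 4 * (n / 4) ∧ (i % 4 = 1 ∨ i % 4 = 2)) ∨ (n % 4 = 3 ∧ i + 2 = n)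

/-- columns that contain `a` -/
def fsA (n i : ℕ) : Prop := 4 * (n / 4) ≤ i ∧ (n % 4 = 3 → i + 2 = n)

/-- the extremal set -/
def fsSet (n : ℕ) : Set (FV n) :=
  {v | (v.2 = 0 ∧ fsA n v.1) ∨ (v.2 = 1 ∧ ¬ fsC n v.1) ∨ ((v.2 = 2 ∨ v.2 = 3) ∧ fsC n v.1)}

lemma fs_alt (n p m q : ℕ) (hn : 3 ≤ n) (hp : p < n)
    (hm : m = if p + 1 = n then 0 else p + 1)
    (hq : q = if m + 1 = n then 0 else m + 1) (hA : ¬ fsA n m) :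
    fsC n p ↔ ¬ fsC n q := by
  unfold fsA at hA
  unfold fsC
  split_ifs at hm hq <;> omega

lemma fs_adj_a (n : ℕ) (m : Fin n) (t : Fin 4) (ht : t ≠ 0) :
    (flowerSnark n).Adj (m, 0) (m, t) := by
  simp [flowerSnark, SimpleGraph.fromRel_adj, ht, ht.symm]

lemma fs_adj_b (n : ℕ) (hn : 3 ≤ n) (p m : Fin n)
    (hm : (m : ℕ) = if (p : ℕ) + 1 = n then 0 else (p : ℕ) + 1) :
    (flowerSnark n).Adj (p, 1) (m, 1) := by
  have h1 := fs_mod n p p.2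
  simp [flowerSnark, SimpleGraph.fromRel_adj, h1, fs_ext (n := n), -Fin.val_eq_zero_iff]
  split_ifs at hm ⊢ <;> omega

lemma fs_adj_cd (n : ℕ) (hn : 3 ≤ n) (p m : Fin n)
    (hm : (m : ℕ) = if (p : ℕ) + 1 = n then 0 else (p : ℕ) + 1) (t : Fin 4)
    (ht : t = 2 ∨ t = 3) :
    ∃ t' : Fin 4, (t' = 2 ∨ t' = 3) ∧ (flowerSnark n).Adj (p, t) (m, t') := by
  by_cases h : (p : ℕ) + 1 = n
  · rw [if_pos h] at hm
    rcases ht with rfl | rfl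
    · refine ⟨3, by simp, ?_⟩
      simp [flowerSnark, SimpleGraph.fromRel_adj, fs_ext (n := n), -Fin.val_eq_zero_iff]; omega
    · refine ⟨2, by simp, ?_⟩
      simp [flowerSnark, SimpleGraph.fromRel_adj, fs_ext (n := n), -Fin.val_eq_zero_iff]; omega
  · rw [if_neg h] at hm
    refine ⟨t, ht, ?_⟩
    rcases ht with rfl | rfl <;>
      simp [flowerSnark, SimpleGraph.fromRel_adj, fs_ext (n := n), -Fin.val_eq_zero_iff] <;> omega

lemma fs_adj_cd' (n : ℕ) (hn : 3 ≤ n) (p m : Fin n)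
    (hm : (m : ℕ) = if (p : ℕ) + 1 = n then 0 else (p : ℕ) + 1) (t : Fin 4)
    (ht : t = 2 ∨ t = 3) :
    ∃ t' : Fin 4, (t' = 2 ∨ t' = 3) ∧ (flowerSnark n).Adj (m, t) (p, t') := by
  obtain ⟨u, hu, h2⟩ := fs_adj_cd n hn p m hm 2 (by simp)
  obtain ⟨u', hu', h3⟩ := fs_adj_cd n hn p m hm 3 (by simp)
  by_cases e : u = t
  · subst e; exact ⟨2, by simp, h2.symm⟩
  · by_cases e' : u' = t
    · subst e'; exact ⟨3, by simp, h3.symm⟩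
    · exfalso
      have : u = u' := by
        rcases hu with rfl | rfl <;> rcases hu' with rfl | rfl <;> rcases ht with rfl | rfl <;>
          simp_all
      subst this
      have hp := p.2
      have hm' := m.2
      rcases hu with rfl | rfl <;>
      simp [flowerSnark, SimpleGraph.fromRel_adj, fs_ext (n := n), -Fin.val_eq_zero_iff] at h2 h3 <;>
      split_ifs at hm <;> omega

lemma fs_dom (n : ℕ) (hn : 3 ≤ n) : TotalDominating n (fsSet n) := by
  have : NeZero n := ⟨by omega⟩
  rintro ⟨m, t⟩
  obtain ⟨p, rfl⟩ : ∃ p : Fin n, p + 1 = m := ⟨m - 1, by simp⟩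
  have hm := fs_val_succ n hn p
  have hq := fs_val_succ n hn (p+1)
  generalize hq' : p + 1 + 1 = q at hq
  generalize hm' : p + 1 = m at *
  by_cases ht : t = 0
  · subst ht
    by_cases hC : fsC n m
    · exact ⟨(m, 2), by simp [fsSet, hC], fs_adj_a n m 2 (by decide)⟩
    · exact ⟨(m, 1), by simp [fsSet, hC], fs_adj_a n m 1 (by decide)⟩
  by_cases hA : fsA n m
  · exact ⟨(m, 0), by simp [fsSet, hA], (fs_adj_a n m t ht).symm⟩
  have alt := fs_alt n p m q hn p.2 hm hq hA
  by_cases ht1 : t = 1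
  · subst ht1
    by_cases hC : fsC n p
    · exact ⟨(q, 1), by simp [fsSet, alt.1 hC], fs_adj_b n hn m q hq⟩
    · exact ⟨(p, 1), by simp [fsSet, hC], (fs_adj_b n hn p m hm).symm⟩
  · have ht2 : t = 2 ∨ t = 3 := by
      revert ht ht1; revert t; decide
    by_cases hC : fsC n p
    · obtain ⟨t', h, h'⟩ := fs_adj_cd' n hn p m hm t ht2
      exact ⟨(p, t'), Or.inr (Or.inr ⟨h, hC⟩), h'⟩
    · obtain ⟨t', h, h'⟩ := fs_adj_cd n hn m q hq t ht2
      exact ⟨(q, t'), Or.inr (Or.inr ⟨h, by_contra fun hh => hC (alt.2 hh)⟩), h'⟩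

lemma fs_sum4 (k : ℕ) :
    ∑ i ∈ Finset.range (4 * k), (if i % 4 = 1 ∨ i % 4 = 2 then 2 else 1) = 6 * k := by
  induction k with
  | zero => simp
  | succ k ih =>
    have : 4 * (k+1) = 4 * k + 1 + 1 + 1 + 1 := by ring
    rw [this]
    simp only [Finset.sum_range_succ, ih]
    have h0 : (4 * k) % 4 = 0 := by omega
    have h1 : (4 * k + 1) % 4 = 1 := by omega
    have h2 : (4 * k + 1 + 1) % 4 = 2 := by omega
    have h3 : (4 * k + 1 + 1 + 1) % 4 = 3 := by omega
    simp [h0, h1, h2, h3]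
    ring

open Classical in
lemma fs_card (n : ℕ) :
    (fsSet n).ncard = 6 * (n / 4) + (if n % 4 = 3 then 5 else 2 * (n % 4)) := by
  have h1 : (fsSet n).ncard = ∑ i ∈ Finset.range n,
      ((if fsA n i then 1 else 0) + (if fsC n i then 2 else 1)) := by
    rw [fs_ncard, Finset.sum_range]
    refine Finset.sum_congr rfl fun i _ => ?_
    by_cases hA : fsA n i <;> by_cases hC : fsC n i <;> simp [fsInd, fsSet, hA, hC]
  rw [h1]
  obtain ⟨k, r, hr, hk⟩ : ∃ k r, r < 4 ∧ n = 4 * k + r := ⟨n / 4, n % 4, by omega, by omega⟩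
  have e1 : n / 4 = k := by omega
  have e2 : n % 4 = r := by omega
  have h2 : ∑ i ∈ Finset.range (4 * k),
      ((if fsA n i then 1 else 0) + (if fsC n i then 2 else 1)) = 6 * k := by
    rw [← fs_sum4]
    refine Finset.sum_congr rfl fun i hi => ?_
    rw [Finset.mem_range] at hi
    have a : ¬ fsA n i := by unfold fsA; omega
    have c : fsC n i ↔ (i % 4 = 1 ∨ i % 4 = 2) := by unfold fsC; omega
    simp [a, c]
  rw [e1, e2]
  nth_rewrite 1 [hk]
  rw [Finset.sum_range_add, h2]
  congr 1
  have a : ∀ j, fsA n (4 * k + j) ↔ (r = 3 → j = 1) := by intro j; unfold fsA; omega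
  have c : ∀ j, fsC n (4 * k + j) ↔ (r = 3 ∧ j = 1) := by intro j; unfold fsC; omega
  simp only [a, c]
  interval_cases r <;> simp [Finset.sum_range_succ]

lemma fs_value (n : ℕ) (hn : 3 ≤ n) :
    totalDominationNumber n = 6 * (n / 4) + (if n % 4 = 3 then 5 else 2 * (n % 4)) := by
  have : NeZero n := ⟨by omega⟩
  apply le_antisymm
  · exact Nat.sInf_le ⟨fsSet n, fs_dom n hn, fs_card n⟩
  · refine le_csInf ⟨_, fsSet n, fs_dom n hn, rfl⟩ ?_
    rintro _ ⟨S, hS, rfl⟩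
    have h1 := fs_lower_s3 hn hS
    have h2 := fs_lower2 hn hS
    split_ifs <;> omega

/-- For every `n ≥ 3`, the total domination number of the flower snark `J_n`
equals `⌈3n/2⌉` if `n ≢ 2 (mod 4)`, and `3n/2 + 1` if `n ≡ 2 (mod 4)`. -/
theorem flowerSnark_totalDomination (n : ℕ) (hn : 3 ≤ n) :
    (n % 4 ≠ 2 → (totalDominationNumber n : ℤ) = ⌈(3 * (n : ℚ)) / 2⌉) ∧
    (n % 4 = 2 → (totalDominationNumber n : ℚ) = 3 * n / 2 + 1) := by
  rw [fs_value n hn]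
  obtain ⟨k, r, hr, hk⟩ : ∃ k r, r < 4 ∧ n = 4 * k + r := ⟨n / 4, n % 4, by omega, by omega⟩
  have e1 : n / 4 = k := by omega
  have e2 : n % 4 = r := by omega
  rw [e1, e2]
  constructor
  · intro h
    symm
    rw [Int.ceil_eq_iff, hk]
    interval_cases r <;> first | (exact absurd rfl h) | (push_cast; constructor <;> norm_num <;> linarith)
  · rintro rfl
    rw [hk]; push_cast; norm_num; ring
end

section
/- For every integer n ≥ 3, the weak Roman domination number of the flower snark J_n equals ⌈(3n+1)/2⌉. -/
set_option linter.unusedVariables false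

namespace FSnark

def nb (z : ℕ × Fin 4) : List (ℕ × Fin 4) :=
  if z.2 = 0 then [(z.1, 1), (z.1, 2), (z.1, 3)] else [(z.1, 0), (z.1 - 1, z.2), (z.1 + 1, z.2)]

def sw (j : Fin 4) : Fin 4 := if j = 2 then 3 else if j = 3 then 2 else j

/-- The covering projection from the strip. -/
def pr (n : ℕ) (hn : 0 < n) (i : ℕ) (j : Fin 4) : FV n :=
  (⟨i % n, Nat.mod_lt _ hn⟩, if (i / n) % 2 = 0 then j else sw j)

/-- Local condition on a window of seven columns, centred at column 3. -/
def WC (e : Bool) (g : ℕ → Fin 4 → ℕ) (j : Fin 4) : Bool :=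
  !(Nat.beq (g 3 j) 0) || (nb (3, j)).any fun w => Nat.ble 1 (g w.1 w.2) &&
    (nb w).all fun u => (u :: nb u).any fun x =>
      decide (x = (3, j)) || (e && (Nat.beq x.1 0 || Nat.beq x.1 6)) ||
      (if x = w then Nat.ble 2 (g x.1 x.2) else Nat.ble 1 (g x.1 x.2))

theorem WC_iff (e : Bool) (g : ℕ → Fin 4 → ℕ) (j : Fin 4) : WC e g j = true ↔
    (g 3 j = 0 → ∃ w ∈ nb (3, j), 1 ≤ g w.1 w.2 ∧ ∀ u ∈ nb w, ∃ x ∈ u :: nb u,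
      x = (3, j) ∨ (e = true ∧ (x.1 = 0 ∨ x.1 = 6)) ∨
      (if x = w then 2 ≤ g x.1 x.2 else 1 ≤ g x.1 x.2)) := by
  unfold WC
  rw [Bool.or_eq_true, List.any_eq_true, imp_iff_not_or]
  refine or_congr ?_ ?_
  · cases h : g 3 j <;> simp [Nat.beq]
  · refine exists_congr fun w => and_congr_right fun hw => ?_
    rw [Bool.and_eq_true, List.all_eq_true]
    refine and_congr (by simp) (forall_congr' fun u => imp_congr_right fun hu => ?_)
    rw [List.any_eq_true]
    refine exists_congr fun x => and_congr_right fun hx => ?_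
    rw [Bool.or_eq_true, Bool.or_eq_true, or_assoc]
    refine or_congr (by simp) (or_congr (by simp) ?_)
    split_ifs <;> simp

theorem WC_mono {e e' : Bool} {g g' : ℕ → Fin 4 → ℕ} {j : Fin 4} (he : e = true → e' = true)
    (hg : ∀ i j, g i j ≤ g' i j) (h : WC e g j = true) : WC e' g' j = true := by
  rw [WC_iff] at *
  intro h0
  obtain ⟨w, hw, h1, h2⟩ := h (by have := hg 3 j; omega)
  refine ⟨w, hw, h1.trans (hg _ _), fun u hu => ?_⟩
  obtain ⟨x, hx, h3⟩ := h2 u hu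
  refine ⟨x, hx, ?_⟩
  rcases h3 with h3 | h3 | h3
  · exact Or.inl h3
  · exact Or.inr (Or.inl ⟨he h3.1, h3.2⟩)
  · refine Or.inr (Or.inr ?_)
    have := hg x.1 x.2
    split_ifs at * <;> omega

theorem nb_col {z x : ℕ × Fin 4} (h : x ∈ nb z) : x.1 ≤ z.1 + 1 ∧ z.1 ≤ x.1 + 1 := by
  unfold nb at h
  split_ifs at h <;> simp at h <;> rcases h with rfl | rfl | rfl <;> simp <;> omega

theorem sw_sw (j : Fin 4) : sw (sw j) = j := by revert j; decide

theorem pr_inj {n : ℕ} (hn : 0 < n) {i i' : ℕ} {j j' : Fin 4} (h : pr n hn i j = pr n hn i' j')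
    (h1 : i < i' + n) (h2 : i' < i + n) : i = i' ∧ j = j' := by
  unfold pr at h
  rw [Prod.mk.injEq, Fin.mk.injEq] at h
  obtain ⟨ha, hb⟩ := h
  have hi : i = i' := by
    have e1 := Nat.div_add_mod i n
    have e2 := Nat.div_add_mod i' n
    rw [ha] at e1
    have : i / n = i' / n := by
      rcases lt_trichotomy (i / n) (i' / n) with h | h | h
      · have := Nat.mul_le_mul_left n (Nat.succ_le_of_lt h)
        rw [Nat.mul_succ] at this; omega
      · exact h
      · have := Nat.mul_le_mul_left n (Nat.succ_le_of_lt h)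
        rw [Nat.mul_succ] at this; omega
    rw [this] at e1; omega
  subst hi
  refine ⟨rfl, ?_⟩
  split_ifs at hb
  · exact hb
  · rw [← sw_sw j, hb, sw_sw]

theorem succ_cases {n : ℕ} (hn : 0 < n) (i : ℕ) :
    (i % n + 1 < n ∧ (i + 1) % n = i % n + 1 ∧ (i + 1) / n = i / n) ∨
    (i % n = n - 1 ∧ (i + 1) % n = 0 ∧ (i + 1) / n = i / n + 1) := by
  have h := Nat.mod_lt i hn
  have e := Nat.div_add_mod i n
  by_cases hc : i % n + 1 < n
  · left
    have : i + 1 = i % n + 1 + n * (i / n) := by omega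
    refine ⟨hc, ?_, ?_⟩
    · rw [this, Nat.add_mul_mod_self_left, Nat.mod_eq_of_lt hc]
    · rw [this, Nat.add_mul_div_left _ _ hn, Nat.div_eq_of_lt hc, zero_add]
      
  · right
    have : i + 1 = n * (i / n + 1) := by rw [Nat.mul_succ]; omega
    refine ⟨by omega, ?_, ?_⟩
    · rw [this, Nat.mul_mod_right]
    · rw [this, Nat.mul_div_cancel_left _ hn]

/-- The raw relation. -/
def R (n : ℕ) (v w : FV n) : Prop :=
    (v.1 = w.1 ∧ v.2 = 0 ∧ w.2 ≠ 0) ∨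
    (((v.1 : ℕ) + 1) % n = (w.1 : ℕ) ∧ v.2 = 1 ∧ w.2 = 1) ∨
    ((v.1 : ℕ) + 1 = (w.1 : ℕ) ∧ v.2 = 2 ∧ w.2 = 2) ∨
    ((v.1 : ℕ) + 1 = (w.1 : ℕ) ∧ v.2 = 3 ∧ w.2 = 3) ∨
    ((v.1 : ℕ) = n - 1 ∧ (w.1 : ℕ) = 0 ∧ v.2 = 2 ∧ w.2 = 3) ∨
    ((v.1 : ℕ) = n - 1 ∧ (w.1 : ℕ) = 0 ∧ v.2 = 3 ∧ w.2 = 2)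

theorem adj_iff {n : ℕ} (v w : FV n) : (flowerSnark n).Adj v w ↔ v ≠ w ∧ (R n v w ∨ R n w v) :=
  SimpleGraph.fromRel_adj _ _ _

theorem pr_surj {n : ℕ} (hn : 0 < n) (i : ℕ) (w : FV n) (h : (w.1 : ℕ) = i % n) :
    ∃ j, w = pr n hn i j := by
  unfold pr
  by_cases hp : (i / n) % 2 = 0
  · exact ⟨w.2, by simp only [hp, if_true]; ext <;> simp [h]⟩
  · exact ⟨sw w.2, by simp only [hp, if_false, sw_sw]; ext <;> simp [h]⟩

theorem R_same {n : ℕ} (hn : 3 ≤ n) (i : ℕ) (j j' : Fin 4) :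
    R n (pr n (by omega) i j) (pr n (by omega) i j') ↔ j = 0 ∧ j' ≠ 0 := by
  have h := Nat.mod_lt i (show 0 < n by omega)
  have h2 : (i % n + 1) % n ≠ i % n := by
    rcases Nat.lt_or_ge (i % n + 1) n with h | h'
    · rw [Nat.mod_eq_of_lt h]; omega
    · have : i % n + 1 = n := by omega
      rw [this, Nat.mod_self]; omega
  have h3 : ¬ (i % n = n - 1 ∧ i % n = 0) := by omega
  unfold R pr
  simp only [h2, false_and, false_or, true_and]
  have h4 : ¬ (i % n + 1 = i % n) := by omega
  simp only [h4, false_and, false_or]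
  rw [← and_assoc, ← and_assoc (a := i % n = n - 1)]
  simp only [h3, false_and, or_false]
  split_ifs
  · rfl
  · revert j j'; decide

theorem R_succ {n : ℕ} (hn : 3 ≤ n) (i : ℕ) (j j' : Fin 4) :
    R n (pr n (by omega) i j) (pr n (by omega) (i + 1) j') ↔ j ≠ 0 ∧ j' = j := by
  have h := Nat.mod_lt i (show 0 < n by omega)
  unfold R pr
  rcases succ_cases (show 0 < n by omega) i with ⟨h1, h2, h3⟩ | ⟨h1, h2, h3⟩
  · simp only [h2, h3, Fin.mk.injEq, Nat.mod_eq_of_lt h1]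
    have h4 : ¬ (i % n = i % n + 1) := by omega
    have h5 : ¬ (i % n + 1 = 0) := by omega
    simp only [h4, h5, false_and, and_false, false_or, or_false, true_and]
    split_ifs
    · revert j j'; decide
    · revert j j'; decide
  · have h0 : n - 1 + 1 = n := by omega
    simp only [h2, h3, Fin.mk.injEq, h1, h0, Nat.mod_self]
    have h4 : ¬ (n - 1 = 0) := by omega
    have h5 : ¬ (n = 0) := by omega
    simp only [h4, h5, false_and, false_or, true_and]
    rcases Nat.mod_two_eq_zero_or_one (i / n) with hp | hp
    · have hq : ¬ ((i / n + 1) % 2 = 0) := by omega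
      simp only [hp, hq, if_true, if_false]
      revert j j'; decide
    · have hq : ((i / n + 1) % 2 = 0) := by omega
      simp only [hp, hq, if_true]
      revert j j'; decide

theorem R_col {n : ℕ} (v w : FV n) (h : R n v w) :
    (w.1 : ℕ) = v.1 ∨ (w.1 : ℕ) = ((v.1 : ℕ) + 1) % n := by
  have h1 := v.1.2
  have h2 := w.1.2
  unfold R at h
  rcases h with h | h | h | h | h | h
  · left; rw [h.1]
  · right; exact h.1.symm
  · right; rw [h.1, Nat.mod_eq_of_lt h2]
  · right; rw [h.1, Nat.mod_eq_of_lt h2]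
  · right; rw [h.1, Nat.sub_add_cancel (by omega), Nat.mod_self]; exact h.2.1
  · right; rw [h.1, Nat.sub_add_cancel (by omega), Nat.mod_self]; exact h.2.1

theorem mod_inj {n : ℕ} (hn : 0 < n) (i a : ℕ) (ha : a < n) (h : (i + 1) % n = (a + 1) % n) :
    a = i % n := by
  have : (i + 1) ≡ (a + 1) [MOD n] := h
  have := Nat.ModEq.add_right_cancel' 1 this
  unfold Nat.ModEq at this
  rw [Nat.mod_eq_of_lt ha] at this
  exact this.symm

theorem mem_nb {i : ℕ} {j : Fin 4} {z : ℕ × Fin 4} (hi : 1 ≤ i) : z ∈ nb (i, j) ↔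
    (z.1 = i ∧ (j = 0 ∧ z.2 ≠ 0 ∨ z.2 = 0 ∧ j ≠ 0)) ∨
    (z.1 = i + 1 ∧ j ≠ 0 ∧ z.2 = j) ∨ (z.1 + 1 = i ∧ z.2 ≠ 0 ∧ j = z.2) := by
  obtain ⟨a, b⟩ := z
  have e : a = i - 1 ↔ a + 1 = i := by omega
  unfold nb
  split_ifs with h
  · simp at h; subst h
    simp
    constructor
    · rintro (h | h | h) <;> simp [h]
    · rintro (⟨h1, h2⟩ | ⟨h1, h2, h3⟩)
      · subst h1
        revert b; simp; decide
      · exact absurd h3.symm h2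
  · simp at h
    simp [h, e]
    constructor
    · rintro (h | h | h) <;> simp [h]
      grind
    · grind

theorem adj_pr {n : ℕ} (hn : 3 ≤ n) (k i : ℕ) (hi : 1 ≤ i) (j : Fin 4) (y : FV n) :
    (flowerSnark n).Adj (pr n (by omega) (k + i) j) y ↔
      ∃ z ∈ nb (i, j), y = pr n (by omega) (k + z.1) z.2 := by
  have hn0 : 0 < n := by omega
  rw [adj_iff]
  constructor
  · rintro ⟨hne, h⟩
    have hc : (∃ j', y = pr n hn0 (k + i) j') ∨ (∃ j', y = pr n hn0 (k + i + 1) j') ∨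
        (∃ j', y = pr n hn0 (k + i - 1) j') := by
      rcases h with h | h
      · rcases R_col _ _ h with h | h
        · left; exact pr_surj hn0 _ _ h
        · right; left; apply pr_surj hn0
          rw [h]; simp [pr]
      · rcases R_col _ _ h with h | h
        · left; exact pr_surj hn0 _ _ h.symm
        · right; right; apply pr_surj hn0
          apply mod_inj hn0 _ _ y.1.2
          rw [← h, Nat.sub_add_cancel (by omega)]; simp [pr]
    rcases hc with ⟨j', rfl⟩ | ⟨j', rfl⟩ | ⟨j', rfl⟩
    · refine ⟨(i, j'), ?_, rfl⟩
      rw [R_same hn, R_same hn] at h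
      rw [mem_nb hi]
      left; exact ⟨rfl, h⟩
    · refine ⟨(i + 1, j'), ?_, rfl⟩
      rw [R_succ hn] at h
      rw [mem_nb hi]
      right; left
      refine ⟨rfl, ?_⟩
      rcases h with h | h
      · exact h
      · exfalso
        rcases R_col _ _ h with h | h
        · simp only [pr] at h
          rcases succ_cases hn0 (k + i) with h' | h' <;> omega
        · simp only [pr] at h
          rw [Nat.mod_add_mod] at h
          rcases succ_cases hn0 (k + i) with h' | h' <;>
            rcases succ_cases hn0 (k + i + 1) with h'' | h'' <;> omega
    · obtain ⟨m, hm⟩ : ∃ m, k + i = m + 1 := ⟨k + i - 1, by omega⟩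
      refine ⟨(i - 1, j'), ?_, by rw [Nat.add_sub_assoc hi]⟩
      have hm' : k + i - 1 = m := by omega
      rw [hm', hm] at h
      rw [R_succ hn] at h
      rw [mem_nb hi]
      right; right
      refine ⟨by simp; omega, ?_⟩
      rcases h with h | h
      · exfalso
        rcases R_col _ _ h with h | h
        · simp only [pr] at h
          rcases succ_cases hn0 m with h' | h' <;> omega
        · simp only [pr] at h
          rw [Nat.mod_add_mod] at h
          rcases succ_cases hn0 m with h' | h' <;>
            rcases succ_cases hn0 (m + 1) with h'' | h'' <;> omega
      · exact h
  · rintro ⟨⟨a, b⟩, hz, rfl⟩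
    have hcol := nb_col hz
    have hne : (a, b) ≠ (i, j) := by
      rintro h
      rw [mem_nb hi] at hz
      simp only [Prod.mk.injEq] at h
      obtain ⟨rfl, rfl⟩ := h
      simp at hz
    simp only at hcol
    constructor
    · intro h
      have := pr_inj hn0 h (by omega) (by omega)
      apply hne
      ext <;> simp
      · omega
      · rw [this.2]
    · rw [mem_nb hi] at hz
      simp only at hz
      rcases hz with ⟨rfl, h⟩ | ⟨rfl, h⟩ | ⟨rfl, h⟩
      · rwa [R_same hn, R_same hn]
      · left; rw [← add_assoc, R_succ hn]; exact h
      · right; rw [← add_assoc, R_succ hn]; exact h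

theorem lower_WC {n : ℕ} (hn : 3 ≤ n) (f : FV n → ℕ) (hf : WeakRomanDominating n f) (k : ℕ)
    (j : Fin 4) :
    WC (decide (n = 3)) (fun t i => f (pr n (by omega) (k + t) i)) j = true := by
  have hn0 : 0 < n := by omega
  rw [WC_iff]
  intro h0
  obtain ⟨w, hw, h1, h2⟩ := hf.2.2 _ h0
  rw [adj_pr hn k 3 (by omega)] at hw
  obtain ⟨w', hw', rfl⟩ := hw
  refine ⟨w', hw', h1, fun u hu => ?_⟩
  have c1 := nb_col hw'
  have c2 := nb_col hu
  simp only at c1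
  have h3 := h2 (pr n hn0 (k + u.1) u.2)
  have h4 : ∃ x ∈ u :: nb u, (if pr n hn0 (k + x.1) x.2 = pr n hn0 (k + 3) j then 1 else
      if pr n hn0 (k + x.1) x.2 = pr n hn0 (k + w'.1) w'.2 then f (pr n hn0 (k + w'.1) w'.2) - 1
      else f (pr n hn0 (k + x.1) x.2)) ≠ 0 := by
    by_contra hcon
    push Not at hcon
    apply h3
    refine ⟨hcon u (by simp), fun y hy => ?_⟩
    rw [adj_pr hn k u.1 (by omega)] at hy
    obtain ⟨z, hz, rfl⟩ := hy
    exact hcon z (List.mem_cons_of_mem _ hz)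
  obtain ⟨x, hx, h5⟩ := h4
  refine ⟨x, hx, ?_⟩
  have c3 : x.1 ≤ u.1 + 1 ∧ u.1 ≤ x.1 + 1 := by
    rcases List.mem_cons.1 hx with rfl | hx
    · omega
    · exact nb_col hx
  by_cases hv : pr n hn0 (k + x.1) x.2 = pr n hn0 (k + 3) j
  · by_cases hlt : k + x.1 < k + 3 + n ∧ k + 3 < k + x.1 + n
    · have := pr_inj hn0 hv hlt.1 hlt.2
      left
      ext
      · simp; omega
      · simp [this.2]
    · right; left
      refine ⟨by simp; omega, by omega⟩
  · rw [if_neg hv] at h5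
    right; right
    by_cases hw : pr n hn0 (k + x.1) x.2 = pr n hn0 (k + w'.1) w'.2
    · rw [if_pos hw, ← hw] at h5
      split_ifs <;> omega
    · rw [if_neg hw] at h5
      rw [if_neg (by rintro rfl; exact hw rfl)]
      omega

theorem upper_WC {n : ℕ} (hn : 3 ≤ n) (f : FV n → ℕ) (hf : ∀ v, f v ≤ 2)
    (h : ∀ i < n, ∀ j, WC false (fun t a => f (pr n (by omega) (2 * n + i - 3 + t) a)) j = true) :
    WeakRomanDominating n f := by
  have hn0 : 0 < n := by omega
  have hlift : ∀ v : FV n, v = pr n hn0 (2 * n + v.1 - 3 + 3) v.2 := by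
    intro v
    have h1 := v.1.2
    have e : 2 * n + (v.1 : ℕ) - 3 + 3 = v.1 + n * 2 := by omega
    unfold pr
    rw [e]
    ext
    · simp [Nat.mod_eq_of_lt h1]
    · rw [Nat.add_mul_div_left _ _ hn0, Nat.div_eq_of_lt h1]; simp
  have key : ∀ v, f v = 0 → ∃ w, (flowerSnark n).Adj v w ∧ 1 ≤ f w ∧
      ∀ u, (flowerSnark n).Adj w u → u ≠ v → 
        ∃ x, (x = u ∨ (flowerSnark n).Adj u x) ∧
        (x = v ∨ (x = w ∧ 2 ≤ f w) ∨ (x ≠ w ∧ 1 ≤ f x)) := by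
    intro v h0
    have h1 := h v.1 v.1.2 v.2
    rw [WC_iff] at h1
    simp only [← hlift] at h1
    obtain ⟨w, hw, hw1, hw2⟩ := h1 h0
    have c1 := nb_col hw
    simp only at c1
    set k := 2 * n + (v.1 : ℕ) - 3 with hk
    refine ⟨pr n hn0 (k + w.1) w.2, ?_, hw1, ?_⟩
    · rw [hlift v, adj_pr hn _ _ (by omega)]
      exact ⟨w, hw, rfl⟩
    · intro u hu huv
      rw [adj_pr hn _ _ (by omega)] at hu
      obtain ⟨u', hu', rfl⟩ := hu
      have c2 := nb_col hu'
      simp only at c2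
      obtain ⟨x, hx, hx2⟩ := hw2 u' hu'
      have c3 : x.1 ≤ u'.1 + 1 ∧ u'.1 ≤ x.1 + 1 := by
        rcases List.mem_cons.1 hx with rfl | hx
        · omega
        · exact nb_col hx
      refine ⟨pr n hn0 (k + x.1) x.2, ?_, ?_⟩
      · rcases List.mem_cons.1 hx with rfl | hx
        · left; rfl
        · right
          rw [adj_pr hn _ _ (by omega)]
          exact ⟨x, hx, rfl⟩
      · rcases hx2 with hx2 | hx2 | hx2
        · left; rw [hx2]; exact (hlift v).symm
        · simp at hx2
        · split_ifs at hx2 with hxw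
          · right; left; subst hxw; exact ⟨rfl, hx2⟩
          · right; right
            refine ⟨fun hh => hxw ?_, hx2⟩
            have := pr_inj hn0 hh (by omega) (by omega)
            ext
            · omega
            · rw [this.2]
  have dom : ∀ v, f v = 0 → ∃ w, (flowerSnark n).Adj v w ∧ 1 ≤ f w := by
    intro v hv
    obtain ⟨w, h1, h2, -⟩ := key v hv
    exact ⟨w, h1, h2⟩
  refine ⟨hf, ?_, ?_⟩
  · rintro v ⟨h0, h1⟩
    obtain ⟨w, h2, h3⟩ := dom v h0
    have := h1 w h2
    omega
  · intro v h0
    obtain ⟨w, hw, hw1, hw2⟩ := key v h0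
    refine ⟨w, hw, hw1, ?_⟩
    rintro u ⟨hu1, hu2⟩
    simp only at hu1 hu2
    by_cases huv : u = v
    · simp [huv] at hu1
    rw [if_neg huv] at hu1
    by_cases huw : u = w
    · have := hu2 v (huw ▸ hw.symm)
      simp at this
    rw [if_neg huw] at hu1
    by_cases hadj : (flowerSnark n).Adj w u
    · obtain ⟨x, hx1, hx2⟩ := hw2 u hadj huv
      have hg : (if x = v then 1 else if x = w then f w - 1 else f x) = 0 := by
        rcases hx1 with rfl | hx1
        · rw [if_neg huv, if_neg huw]; exact hu1
        · exact hu2 x hx1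
      by_cases hxv : x = v
      · simp [hxv] at hg
      rw [if_neg hxv] at hg
      rcases hx2 with hx2 | hx2 | hx2
      · exact hxv hx2
      · rw [if_pos hx2.1] at hg; omega
      · rw [if_neg hx2.1] at hg; omega
    · obtain ⟨y, hy1, hy2⟩ := dom u hu1
      have := hu2 y hy1
      by_cases hyv : y = v
      · simp [hyv] at this
      rw [if_neg hyv, if_neg (by rintro rfl; exact hadj hy1.symm)] at this
      omega

/-! Weight sequences -/

def pot (x y z : ℕ) : ℤ :=
  if x = 1 then (if y = 1 then -2 else if y = 2 ∧ z = 1 then -1 else 0)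
  else if x = 2 ∧ y = 1 then (if z = 1 then 0 else 1) else 2

theorem pot_step (x y z t : ℕ) (hx : 1 ≤ x) (hy : 1 ≤ y) (hz : 1 ≤ z) (ht : 1 ≤ t)
    (A : ¬ (x = 1 ∧ y = 1 ∧ z = 1))
    (B : ¬ (x = 1 ∧ y = 1 ∧ z = 2 ∧ t = 1)) (B' : ¬ (x = 1 ∧ y = 2 ∧ z = 1 ∧ t = 1)) :
    pot x y z ≤ 4 * x - 6 + pot y z t := by
  unfold pot
  split_ifs <;> omega

theorem pot_tight (x y z t : ℕ) (hx : 1 ≤ x) (hy : 1 ≤ y) (hz : 1 ≤ z) (ht : 1 ≤ t)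
    (A : ¬ (x = 1 ∧ y = 1 ∧ z = 1))
    (B : ¬ (x = 1 ∧ y = 1 ∧ z = 2 ∧ t = 1)) (B' : ¬ (x = 1 ∧ y = 2 ∧ z = 1 ∧ t = 1))
    (T : pot x y z = 4 * x - 6 + pot y z t) : x ≤ 2 ∧ ¬ (x = 2 ∧ y = 2 ∧ z = 2) ∧
     ¬ (x = 2 ∧ y = 2 ∧ z = 1 ∧ t = 2) ∧ ¬ (x = 2 ∧ y = 1 ∧ z = 2 ∧ t = 2) := by
  unfold pot at T
  split_ifs at T <;> omega

theorem seq_lemma (n : ℕ) (w : ℕ → ℕ) (hp : ∀ k, w (k + n) = w k)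
    (h1 : ∀ k, 1 ≤ w k)
    (A : ∀ k, ¬ (w k = 1 ∧ w (k + 1) = 1 ∧ w (k + 2) = 1))
    (B : ∀ k, ¬ (w k = 1 ∧ w (k + 1) = 1 ∧ w (k + 2) = 2 ∧ w (k + 3) = 1))
    (B' : ∀ k, ¬ (w k = 1 ∧ w (k + 1) = 2 ∧ w (k + 2) = 1 ∧ w (k + 3) = 1)) :
    3 * n ≤ 2 * ∑ k ∈ Finset.range n, w k ∧
    (3 * n = 2 * ∑ k ∈ Finset.range n, w k → ∀ k < n,
      w k ≤ 2 ∧ ¬ (w k = 2 ∧ w (k + 1) = 2 ∧ w (k + 2) = 2) ∧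
     ¬ (w k = 2 ∧ w (k + 1) = 2 ∧ w (k + 2) = 1 ∧ w (k + 3) = 2) ∧
     ¬ (w k = 2 ∧ w (k + 1) = 1 ∧ w (k + 2) = 2 ∧ w (k + 3) = 2)) := by
  let P : ℕ → ℤ := fun k => pot (w k) (w (k + 1)) (w (k + 2))
  have hP : P n = P 0 := by
    have e0 := hp 0
    have e1 := hp 1
    have e2 := hp 2
    rw [add_comm] at e0 e1 e2
    simp only [P]
    rw [e1, e2]
    simp only [add_zero] at e0
    rw [e0]
  have hs : ∑ k ∈ Finset.range n, (P (k + 1) - P k) = 0 := by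
    rw [Finset.sum_range_sub, hP, sub_self]
  have hstep : ∀ k, 0 ≤ 4 * (w k : ℤ) - 6 + (P (k + 1) - P k) := by
    intro k
    have := pot_step _ _ _ _ (h1 k) (h1 (k + 1)) (h1 (k + 2)) (h1 (k + 3)) (A k) (B k) (B' k)
    simp only [P, add_assoc]
    norm_num
    linarith
  have htot : ∑ k ∈ Finset.range n, (4 * (w k : ℤ) - 6 + (P (k + 1) - P k)) =
      4 * ((∑ k ∈ Finset.range n, w k : ℕ) : ℤ) - 6 * n := by
    rw [Finset.sum_add_distrib, hs, Finset.sum_sub_distrib, ← Finset.mul_sum]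
    simp; ring
  have hnn := Finset.sum_nonneg (s := Finset.range n) (fun k _ => hstep k)
  rw [htot] at hnn
  refine ⟨by omega, fun he k hk => ?_⟩
  have hz : ∑ k ∈ Finset.range n, (4 * (w k : ℤ) - 6 + (P (k + 1) - P k)) = 0 := by
    rw [htot]; omega
  rw [Finset.sum_eq_zero_iff_of_nonneg (fun k _ => hstep k)] at hz
  have := hz k (Finset.mem_range.2 hk)
  refine pot_tight _ _ _ _ (h1 k) (h1 (k + 1)) (h1 (k + 2)) (h1 (k + 3))
    (A k) (B k) (B' k) ?_
  simp only [P, add_assoc] at this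
  norm_num at this
  linarith

theorem seq_tight (w : ℕ → ℕ) 
    (h1 : ∀ k, 1 ≤ w k)
    (A : ∀ k, ¬ (w k = 1 ∧ w (k + 1) = 1 ∧ w (k + 2) = 1))
    (B : ∀ k, ¬ (w k = 1 ∧ w (k + 1) = 1 ∧ w (k + 2) = 2 ∧ w (k + 3) = 1))
    (B' : ∀ k, ¬ (w k = 1 ∧ w (k + 1) = 2 ∧ w (k + 2) = 1 ∧ w (k + 3) = 1))
    (T : ∀ k, w k ≤ 2 ∧ ¬ (w k = 2 ∧ w (k + 1) = 2 ∧ w (k + 2) = 2) ∧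
     ¬ (w k = 2 ∧ w (k + 1) = 2 ∧ w (k + 2) = 1 ∧ w (k + 3) = 2) ∧
     ¬ (w k = 2 ∧ w (k + 1) = 1 ∧ w (k + 2) = 2 ∧ w (k + 3) = 2)) :
    (∃ k, w k = 1 ∧ w (k + 1) = 2 ∧ w (k + 2) = 1 ∧ w (k + 3) = 2 ∧ w (k + 4) = 1 ∧ w (k + 5) = 2
      ∧ w (k + 6) = 1) ∨
    (∃ k, ∀ m, w (k + 4 * m) = 1 ∧ w (k + 4 * m + 1) = 1 ∧ w (k + 4 * m + 2) = 2 ∧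
      w (k + 4 * m + 3) = 2) := by
  have R : ∀ k, (w k = 1 ∨ w k = 2) := fun k => by have := h1 k; have := (T k).1; omega
  by_cases hx : ∃ k, w k = 1 ∧ w (k + 1) = 1
  · right
    obtain ⟨k, hk⟩ := hx
    refine ⟨k, fun m => ?_⟩
    have adv : ∀ k, w k = 1 ∧ w (k + 1) = 1 → w (k + 2) = 2 ∧ w (k + 3) = 2 ∧ w (k + 4) = 1 ∧ w (k + 5) = 1 := by
      intro k hk
      have e2 : w (k + 2) = 2 := (R (k + 2)).resolve_left fun h => A k ⟨hk.1, hk.2, h⟩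
      have e3 : w (k + 3) = 2 := (R (k + 3)).resolve_left fun h => B k ⟨hk.1, hk.2, e2, h⟩
      have e4 : w (k + 4) = 1 := (R (k + 4)).resolve_right fun h => (T (k + 2)).2.1 ⟨e2, e3, h⟩
      have e5 : w (k + 5) = 1 :=
        (R (k + 5)).resolve_right fun h => (T (k + 2)).2.2.1 ⟨e2, e3, e4, h⟩
      exact ⟨e2, e3, e4, e5⟩
    have base : ∀ m, w (k + 4 * m) = 1 ∧ w (k + 4 * m + 1) = 1 := by
      intro m
      induction m with
      | zero => simpa using hk
      | succ m ih =>
        have := adv _ ih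
        rw [show k + 4 * (m + 1) = k + 4 * m + 4 by ring]
        exact this.2.2
    have b := base m
    have := adv _ b
    exact ⟨b.1, b.2, this.1, this.2.1⟩
  · left
    push Not at hx
    have c : ∀ k, w k = 1 → w (k + 1) = 2 := fun k hk => by
      have := hx k hk; have := R (k + 1); omega
    have d : ∀ k, w k = 2 → w (k + 1) = 1 := fun k hk => by
      refine (R (k + 1)).resolve_right fun h => ?_
      rcases R (k + 2) with h' | h'
      · exact (T k).2.2.1 ⟨hk, h, h', c _ h'⟩
      · exact (T k).2.1 ⟨hk, h, h'⟩
    obtain ⟨k, hk⟩ : ∃ k, w k = 1 := by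
      rcases R 0 with h | h
      · exact ⟨0, h⟩
      · exact ⟨1, d 0 h⟩
    have c1 := c _ hk
    have c2 := d _ c1
    have c3 := c _ c2
    have c4 := d _ c3
    have c5 := c _ c4
    have c6 := d _ c5
    exact ⟨k, hk, c1, c2, c3, c4, c5, c6⟩

abbrev Col := ℕ × ℕ × ℕ × ℕ

def get (c : Col) (j : Fin 4) : ℕ :=
  match j with
  | 0 => c.1
  | 1 => c.2.1
  | 2 => c.2.2.1
  | 3 => c.2.2.2

def tA (a2 a4 x1 x2 x3 x4 x5 : ℕ) : Bool :=
  Nat.ble 1 x3 && (Nat.ble 2 x3 || (Nat.ble 1 (x2 + a2 + x1) && Nat.ble 1 (x4 + a4 + x5)))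

def rowA (g : ℕ → Fin 4 → ℕ) : Bool :=
  Nat.ble 1 (g 3 0) || (tA (g 2 0) (g 4 0) (g 1 1) (g 2 1) (g 3 1) (g 4 1) (g 5 1) ||
    (tA (g 2 0) (g 4 0) (g 1 2) (g 2 2) (g 3 2) (g 4 2) (g 5 2) ||
    tA (g 2 0) (g 4 0) (g 1 3) (g 2 3) (g 3 3) (g 4 3) (g 5 3)))

def tB (e : Bool) (x0 x1 x2 a1 a2 y2 z2 : ℕ) : Bool :=
  Nat.ble 1 x2 && (Nat.ble 2 x2 || (Nat.ble 1 (a2 + y2 + z2) && (e || Nat.ble 1 (x1 + a1 + x0))))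

def rowB (e : Bool) (g : ℕ → Fin 4 → ℕ) (r s t : Fin 4) : Bool :=
  Nat.ble 1 (g 3 r) || ((Nat.ble 1 (g 3 0) && (Nat.ble 2 (g 3 0) ||
      (Nat.ble 1 (g 3 s + g 2 s + g 4 s) && Nat.ble 1 (g 3 t + g 2 t + g 4 t)))) ||
    (tB e (g 0 r) (g 1 r) (g 2 r) (g 1 0) (g 2 0) (g 2 s) (g 2 t) ||
    tB e (g 6 r) (g 5 r) (g 4 r) (g 5 0) (g 4 0) (g 4 s) (g 4 t)))

theorem beq0 (x : ℕ) : x.beq 0 = false ↔ 1 ≤ x := by cases x <;> simp [Nat.beq]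

theorem rowA_of {e : Bool} {g : ℕ → Fin 4 → ℕ} (h : WC e g 0 = true) : rowA g = true := by
  simp only [rowA, tA, Bool.or_eq_true, Bool.and_eq_true, Nat.ble_eq]
  simp [WC, nb, beq0] at h
  rcases h with h | h | h | h
  · exact Or.inl h
  · right; left; omega
  · right; right; left; omega
  · right; right; right; omega

theorem rowB_of {e : Bool} {g : ℕ → Fin 4 → ℕ} (r s t : Fin 4)
    (hr : (r = 1 ∧ s = 2 ∧ t = 3) ∨ (r = 2 ∧ s = 1 ∧ t = 3) ∨ (r = 3 ∧ s = 1 ∧ t = 2))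
    (h : WC e g r = true) : rowB e g r s t = true := by
  simp only [rowB, tB, Bool.or_eq_true, Bool.and_eq_true, Nat.ble_eq]
  rcases hr with ⟨rfl, rfl, rfl⟩ | ⟨rfl, rfl, rfl⟩ | ⟨rfl, rfl, rfl⟩ <;>
  · simp [WC, nb, beq0] at h
    rcases h with h | h | h | h
    · exact Or.inl h
    · right; left; omega
    · right; right; left
      cases e <;> simp only [Bool.false_eq_true, true_or, or_true, and_true, false_or] at h ⊢ <;> omega
    · right; right; right
      cases e <;> simp only [Bool.false_eq_true, true_or, or_true, and_true, false_or] at h ⊢ <;> omega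

def sel (c0 c1 c2 c3 c4 c5 c6 : Col) (i : ℕ) : Fin 4 → ℕ :=
  get (match i with
      | 0 => c0
      | 1 => c1
      | 2 => c2
      | 3 => c3
      | 4 => c4
      | 5 => c5
      | _ => c6)

def KK (e : Bool) (g : ℕ → Fin 4 → ℕ) : Bool :=
  rowA g && (rowB e g 1 2 3 && (rowB e g 2 1 3 && rowB e g 3 1 2))

/-- Window check on (reversed) lists. -/
def K7 (e : Bool) : List Col → Bool
  | c6 :: c5 :: c4 :: c3 :: c2 :: c1 :: c0 :: _ =>
    KK e (sel c0 c1 c2 c3 c4 c5 c6)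
  | _ => true

abbrev W : Col := (2, 2, 2, 2)

def okW (e : Bool) (l : List Col) : Bool :=
  K7 e (W :: W :: W :: l) && (K7 e (W :: W :: l) && (K7 e (W :: l) && K7 e l))

def Dm (F : ℕ → Fin 4 → ℕ) : ℕ → List Col → Prop
  | _, [] => True
  | i, c :: l => (∀ j, F i j ≤ get c j) ∧ Dm F (i - 1) l

theorem K7_sound {e : Bool} {F : ℕ → Fin 4 → ℕ} (h2 : ∀ i j, F i j ≤ 2)
    (hF : ∀ k j, WC e (fun t a => F (k + t) a) j = true) (k : ℕ) (l : List Col)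
    (hl : Dm F (k + 6) l) : K7 e l = true := by
  unfold K7
  split
  · rename_i c6 c5 c4 c3 c2 c1 c0 l
    obtain ⟨h6, h5, h4, h3, h2', h1, h0, -⟩ := hl
    set g := sel c0 c1 c2 c3 c4 c5 c6
    unfold KK
    have key : ∀ j, WC e (fun i a => if i ≤ 6 then g i a else 2) j = true := by
      intro j
      refine WC_mono id (fun i a => ?_) (hF k j)
      by_cases hi : i ≤ 6
      · rw [if_pos hi]
        interval_cases i
        · exact h0 a
        · exact h1 a
        · exact h2' a
        · exact h3 a
        · exact h4 a
        · exact h5 a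
        · exact h6 a
      · rw [if_neg hi]
        exact h2 _ _
    rw [Bool.and_eq_true, Bool.and_eq_true, Bool.and_eq_true]
    exact ⟨rowA_of (key 0), rowB_of 1 2 3 (by simp) (key 1), rowB_of 2 1 3 (by simp) (key 2),
      rowB_of 3 1 2 (by simp) (key 3)⟩
  · rfl

theorem W_le {F : ℕ → Fin 4 → ℕ} (h2 : ∀ i j, F i j ≤ 2) (i : ℕ) (j : Fin 4) :
    F i j ≤ get W j := by
  refine (h2 i j).trans ?_
  fin_cases j <;> simp [get]

theorem okW_sound {e : Bool} {F : ℕ → Fin 4 → ℕ} (h2 : ∀ i j, F i j ≤ 2)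
    (hF : ∀ k j, WC e (fun t a => F (k + t) a) j = true) (k : ℕ) (l : List Col)
    (hl : Dm F (k + 6) l) : okW e l = true := by
  have l1 : Dm F (k + 1 + 6) (W :: l) := ⟨W_le h2 _, hl⟩
  have l2 : Dm F (k + 2 + 6) (W :: W :: l) := ⟨W_le h2 _, l1⟩
  have l3 : Dm F (k + 3 + 6) (W :: W :: W :: l) := ⟨W_le h2 _, l2⟩
  unfold okW
  rw [K7_sound h2 hF _ _ hl, K7_sound h2 hF _ _ l1, K7_sound h2 hF _ _ l2, K7_sound h2 hF _ _ l3]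
  rfl

def colsOf : ℕ → List Col
  | 1 => [(1, 0, 0, 0), (0, 1, 0, 0), (0, 0, 1, 0), (0, 0, 0, 1)]
  | 2 => [(2, 0, 0, 0), (0, 2, 0, 0), (0, 0, 2, 0), (0, 0, 0, 2),
      (1, 1, 0, 0), (1, 0, 1, 0), (1, 0, 0, 1), (0, 1, 1, 0), (0, 1, 0, 1), (0, 0, 1, 1)]
  | _ => []

def search (e : Bool) (P : List Col → Bool) : List ℕ → List Col → Bool
  | [], l => P l
  | p :: ps, l => (colsOf p).all fun c => !(okW e (c :: l)) || search e P ps (c :: l)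

def colAt (F : ℕ → Fin 4 → ℕ) (i : ℕ) : Col := (F i 0, F i 1, F i 2, F i 3)

def wtAt (F : ℕ → Fin 4 → ℕ) (i : ℕ) : ℕ := F i 0 + F i 1 + F i 2 + F i 3

theorem get_colAt (F : ℕ → Fin 4 → ℕ) (i : ℕ) (j : Fin 4) : get (colAt F i) j = F i j := by
  fin_cases j <;> rfl

theorem mem_colsOf (F : ℕ → Fin 4 → ℕ) (i p : ℕ) (hp : p = 1 ∨ p = 2) (h : wtAt F i = p) :
    colAt F i ∈ colsOf p := by
  unfold wtAt at h
  unfold colAt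
  generalize F i 0 = a at *
  generalize F i 1 = b at *
  generalize F i 2 = c at *
  generalize F i 3 = d at *
  have ha : a ≤ 2 := by omega
  have hb : b ≤ 2 := by omega
  have hc : c ≤ 2 := by omega
  have hd : d ≤ 2 := by omega
  rcases hp with rfl | rfl <;> simp only [colsOf] <;>
  interval_cases a <;> interval_cases b <;> interval_cases c <;>
    first
    | (exfalso; omega)
    | (obtain rfl : d = 0 := by omega
       decide)
    | (obtain rfl : d = 1 := by omega
       decide)
    | (obtain rfl : d = 2 := by omega
       decide)

def wl (F : ℕ → Fin 4 → ℕ) (k : ℕ) : ℕ → List Col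
  | 0 => [W, W, W]
  | m + 1 => colAt F (k + m) :: wl F k m

theorem Dm_wl {F : ℕ → Fin 4 → ℕ} (h2 : ∀ i j, F i j ≤ 2) (k : ℕ) (m : ℕ) :
    Dm F (k + 6 + m) (wl F (k + 7) m) := by
  induction m with
  | zero => exact ⟨W_le h2 _, W_le h2 _, W_le h2 _, trivial⟩
  | succ m ih =>
    refine ⟨fun j => ?_, ih⟩
    rw [get_colAt, show k + 6 + (m + 1) = k + 7 + m by ring]

theorem search_sound {e : Bool} {F : ℕ → Fin 4 → ℕ} (h2 : ∀ i j, F i j ≤ 2)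
    (hF : ∀ k j, WC e (fun t a => F (k + t) a) j = true) (P : List Col → Bool) (k : ℕ)
    (ps : List ℕ) (m : ℕ) (hs : search e P ps (wl F (k + 7) m) = true)
    (hps : ∀ p ∈ ps, p = 1 ∨ p = 2)
    (hw : ∀ t (ht : t < ps.length), wtAt F (k + 7 + (m + t)) = ps[t]) :
    P (wl F (k + 7) (m + ps.length)) = true := by
  induction ps generalizing m with
  | nil => simpa [search] using hs
  | cons p ps ih =>
    unfold search at hs
    rw [List.all_eq_true] at hs
    have h0 := hw 0 (by simp)
    simp only [List.getElem_cons_zero, add_zero] at h0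
    have h1 := hs _ (mem_colsOf F _ p (hps p (by simp)) h0)
    have h3 : okW e (colAt F (k + 7 + m) :: wl F (k + 7) m) = true := by
      refine okW_sound h2 hF (k + m + 1) _ ?_
      have := Dm_wl h2 k (m + 1)
      rw [show k + m + 1 + 6 = k + 6 + (m + 1) by ring]
      exact this
    rw [h3] at h1
    have := ih (m + 1) (by simpa [wl] using h1) (fun q hq => hps q (by simp [hq])) (by
      intro t ht
      have := hw (t + 1) (by simpa using ht)
      simpa [add_assoc, add_comm 1 t] using this)
    rw [List.length_cons]
    rw [show m + (ps.length + 1) = m + 1 + ps.length by ring]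
    exact this

theorem search_sound' {e : Bool} {F : ℕ → Fin 4 → ℕ} (h2 : ∀ i j, F i j ≤ 2)
    (hF : ∀ k j, WC e (fun t a => F (k + t) a) j = true) (P : List Col → Bool) (k : ℕ)
    (ps : List ℕ) (hs : search e P ps [W, W, W] = true)
    (hps : ∀ p ∈ ps, p = 1 ∨ p = 2)
    (hw : ∀ t (ht : t < ps.length), wtAt F (k + 7 + t) = ps[t]) :
    P (wl F (k + 7) ps.length) = true := by
  have := search_sound h2 hF P k ps 0 hs hps (by simpa using hw)
  simpa using this

def swc (c : Col) : Col := (c.1, c.2.1, c.2.2.2, c.2.2.1)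

def PD : List Col → Bool
  | _ :: d :: c :: _ :: _ :: b :: a :: _ => decide (a = c) && decide (b = d) &&
      !(decide (swc a = a) && decide (swc b = b))
  | _ => false

theorem sA : search true (fun _ => false) [1, 1, 1] [W, W, W] = true := by decide +kernel
theorem sB : search true (fun _ => false) [1, 1, 2, 1] [W, W, W] = true := by decide +kernel
theorem sB' : search true (fun _ => false) [1, 2, 1, 1] [W, W, W] = true := by decide +kernel
theorem sC : search false (fun _ => false) [1, 2, 1, 2, 1, 2, 1] [W, W, W] = true := by
  decide +kernel
theorem sD : search false PD [1, 1, 2, 2, 1, 1, 2] [W, W, W] = true := by decide +kernel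

theorem pr_shift {n : ℕ} (hn : 0 < n) (i : ℕ) (j : Fin 4) : pr n hn (i + n) j = pr n hn i (sw j) := by
  unfold pr
  ext
  · simp
  · rw [Nat.add_div_right _ hn]
    rcases Nat.mod_two_eq_zero_or_one (i / n) with h | h
    · have : (i / n).succ % 2 = 1 := by omega
      simp [h, this]
    · have : (i / n).succ % 2 = 0 := by omega
      simp [h, this, sw_sw]

theorem pr_lt {n : ℕ} (hn : 0 < n) (i : ℕ) (hi : i < n) (j : Fin 4) :
    pr n hn i j = (⟨i, hi⟩, j) := by
  unfold pr
  simp [Nat.mod_eq_of_lt hi, Nat.div_eq_of_lt hi]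

theorem sum_eq {n : ℕ} (hn : 0 < n) (f : FV n → ℕ) :
    ∑ v, f v = ∑ k ∈ Finset.range n, wtAt (fun i j => f (pr n hn i j)) k := by
  rw [Finset.sum_range, Fintype.sum_prod_type]
  refine Finset.sum_congr rfl fun i _ => ?_
  rw [Fin.sum_univ_four]
  simp only [wtAt, pr_lt hn _ i.2]

theorem per_mul {α : Type*} {n : ℕ} (w : ℕ → α) (hp : ∀ k, w (k + n) = w k) (m k : ℕ) :
    w (k + m * n) = w k := by
  induction m with
  | zero => simp
  | succ m ih => rw [show k + (m + 1) * n = k + m * n + n by ring, hp, ih]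

theorem lower {n : ℕ} (hn : 3 ≤ n) (f : FV n → ℕ) (hf : WeakRomanDominating n f) :
    3 * n + 1 ≤ 2 * ∑ v, f v := by
  have hn0 : 0 < n := by omega
  rw [sum_eq hn0]
  obtain ⟨F, hFd⟩ : ∃ F : ℕ → Fin 4 → ℕ, F = fun i j => f (pr n hn0 i j) := ⟨_, rfl⟩
  rw [← hFd]
  have h2 : ∀ i j, F i j ≤ 2 := fun i j => by rw [hFd]; exact hf.1 _
  have hF : ∀ k j, WC (decide (n = 3)) (fun t a => F (k + t) a) j = true := fun k j => by
    rw [hFd]; exact lower_WC hn f hf k j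
  have hFt : ∀ k j, WC true (fun t a => F (k + t) a) j = true := fun k j =>
    WC_mono (fun _ => rfl) (fun _ _ => le_rfl) (hF k j)
  have hsh : ∀ i j, F (i + n) j = F i (sw j) := fun i j => by
    rw [hFd]; simp only [pr_shift]
  have hcol : ∀ i, colAt F (i + n) = swc (colAt F i) := fun i => by
    simp only [colAt, swc, hsh]; simp [sw]
  have hp : ∀ k, wtAt F (k + n) = wtAt F k := fun k => by
    simp only [wtAt, hsh]; simp [sw]; ring
  have h1 : ∀ k, 1 ≤ wtAt F k := by
    intro k
    have h7 := per_mul _ hp 3 k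
    have := rowA_of (hF (k + 3 * n - 3) 0)
    rw [← h7]
    simp only [rowA, tA, Bool.or_eq_true, Bool.and_eq_true, Nat.ble_eq] at this
    rw [show k + 3 * n - 3 + 3 = k + 3 * n by omega] at this
    unfold wtAt
    omega
  have pat : ∀ (e : Bool) (_ : ∀ k j, WC e (fun t a => F (k + t) a) j = true) (ps : List ℕ)
      (_ : search e (fun _ => false) ps [W, W, W] = true) (_ : ∀ p ∈ ps, p = 1 ∨ p = 2) (k : ℕ),
      ¬ (∀ t (ht : t < ps.length), wtAt F (k + t) = ps[t]) := by
    intro e he ps hs hps k hw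
    have := search_sound' h2 he (fun _ => false) (k + 7 * n - 7) ps hs hps (by
      intro t ht
      rw [← hw t ht, show k + 7 * n - 7 + 7 + t = k + t + 7 * n by omega]
      exact per_mul _ hp 7 _)
    simp at this
  have A : ∀ k, ¬ (wtAt F k = 1 ∧ wtAt F (k + 1) = 1 ∧ wtAt F (k + 2) = 1) := by
    rintro k ⟨a, b, c⟩
    refine pat true hFt _ sA (by simp) k fun t ht => ?_
    simp at ht
    interval_cases t <;> simpa
  have B : ∀ k, ¬ (wtAt F k = 1 ∧ wtAt F (k + 1) = 1 ∧ wtAt F (k + 2) = 2 ∧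
      wtAt F (k + 3) = 1) := by
    rintro k ⟨a, b, c, d⟩
    refine pat true hFt _ sB (by simp) k fun t ht => ?_
    simp at ht
    interval_cases t <;> simpa
  have B' : ∀ k, ¬ (wtAt F k = 1 ∧ wtAt F (k + 1) = 2 ∧ wtAt F (k + 2) = 1 ∧
      wtAt F (k + 3) = 1) := by
    rintro k ⟨a, b, c, d⟩
    refine pat true hFt _ sB' (by simp) k fun t ht => ?_
    simp at ht
    interval_cases t <;> simpa
  obtain ⟨hle, hti⟩ := seq_lemma n (wtAt F) hp h1 A B B'
  by_contra hlt
  have heq : 3 * n = 2 * ∑ k ∈ Finset.range n, wtAt F k := by omega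
  have hne : n ≠ 3 := by omega
  have hFf : ∀ k j, WC false (fun t a => F (k + t) a) j = true := by
    intro k j
    have := hF k j
    rwa [decide_eq_false hne] at this
  have hmod : ∀ k t, wtAt F (k % n + t) = wtAt F (k + t) := by
    intro k t
    have := per_mul _ hp (k / n) (k % n + t)
    rw [← this]
    congr 1
    have := Nat.mod_add_div k n
    nlinarith
  rcases seq_tight (wtAt F) h1 A B B' (fun k => by
    have := hti heq (k % n) (Nat.mod_lt _ hn0)
    have h0 := hmod k 0
    rw [add_zero, add_zero] at h0
    rwa [h0, hmod, hmod, hmod] at this) with ⟨k, a, b, c, d, e, g, h⟩ | ⟨k, hk⟩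
  · refine pat false hFf _ sC (by simp) k fun t ht => ?_
    simp at ht
    interval_cases t <;> simpa
  · have hPD : ∀ m, PD (wl F (k + 1 + 4 * m + 7) 7) = true := by
      intro m
      refine search_sound' h2 hFf PD (k + 1 + 4 * m) _ sD (by simp) fun t ht => ?_
      obtain ⟨a, b, c, d⟩ := hk (m + 2)
      obtain ⟨a', b', c', d'⟩ := hk (m + 3)
      simp at ht
      rw [show k + 1 + 4 * m + 7 + t = k + 4 * (m + 2) + t by ring]
      rw [show k + 4 * (m + 3) = k + 4 * (m + 2) + 4 by ring] at a' b' c' d'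
      interval_cases t <;> simpa
    simp only [wl, PD, Bool.and_eq_true, decide_eq_true_eq, add_zero] at hPD
    have cst : ∀ m, colAt F (k + 8 + 4 * m) = colAt F (k + 8) ∧
        colAt F (k + 9 + 4 * m) = colAt F (k + 9) := by
      intro m
      induction m with
      | zero => exact ⟨rfl, rfl⟩
      | succ m ih =>
        obtain ⟨⟨x, y⟩, -⟩ := hPD m
        rw [show k + 1 + 4 * m + 7 = k + 8 + 4 * m by ring] at x y
        rw [show k + 8 + 4 * m + 1 = k + 9 + 4 * m by ring,
          show k + 8 + 4 * m + 5 = k + 9 + 4 * (m + 1) by ring] at y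
        rw [show k + 8 + 4 * m + 4 = k + 8 + 4 * (m + 1) by ring] at x
        exact ⟨x ▸ ih.1, y ▸ ih.2⟩
    have h4 : n % 4 = 0 := by
      rcases (by omega : n % 4 = 0 ∨ n % 4 = 2) with h | h
      · exact h
      · exfalso
        have a := (hk 0).1
        have b := (hk (n / 4)).2.2.1
        rw [show k + 4 * (n / 4) + 2 = k + n by omega, hp] at b
        rw [Nat.mul_zero, add_zero] at a
        omega
    have h5 := cst (n / 4)
    rw [show 4 * (n / 4) = n by omega, hcol, hcol] at h5
    have h6 := (hPD 0).2
    rw [show k + 1 + 4 * 0 + 7 = k + 8 by ring, show k + 8 + 1 = k + 9 by ring] at h6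
    simp [h5] at h6

def blk (i : ℕ) : Col :=
  match i with
  | 0 => (0, 0, 0, 1)
  | 1 => (0, 0, 1, 0)
  | 2 => (0, 1, 0, 1)
  | _ => (0, 1, 1, 0)

def pre (r : ℕ) : List Col :=
  match r with
  | 3 => [(0, 0, 1, 0), (0, 1, 0, 1), (0, 1, 1, 0)]
  | 4 => [(0, 0, 1, 0), (0, 0, 1, 1), (0, 1, 0, 1), (0, 1, 1, 0)]
  | 5 => [(0, 0, 1, 0), (0, 0, 0, 1), (0, 1, 1, 0), (0, 1, 0, 1), (0, 1, 1, 0)]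
  | _ => [(0, 0, 1, 0), (0, 0, 0, 1), (0, 1, 1, 0), (0, 0, 1, 1), (0, 1, 0, 1), (0, 1, 1, 0)]

/-- The columns of the optimal function. -/
def cl (r i : ℕ) : Col := if i < r then (pre r).getD i (0, 0, 0, 0) else blk ((i - r) % 4)

/-- Lifted columns, shifted by three. -/
def X (r n p : ℕ) : Col :=
  if p < 3 then swc (cl r (n + p - 3)) else if p - 3 < n then cl r (p - 3)
  else swc (cl r (p - 3 - n))

def rr (n : ℕ) : ℕ := 3 + (n + 1) % 4

theorem cl_congr (r i i' : ℕ) (h : i = i' ∨ (r ≤ i ∧ r ≤ i' ∧ i % 4 = i' % 4)) :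
    cl r i = cl r i' := by
  rcases h with rfl | ⟨h1, h2, h3⟩
  · rfl
  · unfold cl
    rw [if_neg (by omega), if_neg (by omega)]
    congr 1
    omega

theorem X_congr (r n n' p p' : ℕ)
    (h : (p < 3 ∧ p' < 3 ∧ (n + p - 3 = n' + p' - 3 ∨
        (r ≤ n + p - 3 ∧ r ≤ n' + p' - 3 ∧ (n + p - 3) % 4 = (n' + p' - 3) % 4))) ∨
      (3 ≤ p ∧ 3 ≤ p' ∧ p - 3 < n ∧ p' - 3 < n' ∧ (p - 3 = p' - 3 ∨
        (r ≤ p - 3 ∧ r ≤ p' - 3 ∧ (p - 3) % 4 = (p' - 3) % 4))) ∨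
      (3 ≤ p ∧ 3 ≤ p' ∧ n ≤ p - 3 ∧ n' ≤ p' - 3 ∧ p - 3 - n = p' - 3 - n')) :
    X r n p = X r n' p' := by
  unfold X
  rcases h with ⟨h1, h2, h3⟩ | ⟨h1, h2, h3, h4, h5⟩ | ⟨h1, h2, h3, h4, h5⟩
  · rw [if_pos h1, if_pos h2, cl_congr _ _ _ h3]
  · rw [if_neg (by omega : ¬ p < 3), if_neg (by omega : ¬ p' < 3), if_pos h3, if_pos h4, cl_congr _ _ _ h5]
  · rw [if_neg (by omega : ¬ p < 3), if_neg (by omega : ¬ p' < 3), if_neg (by omega : ¬ p - 3 < n),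
      if_neg (by omega : ¬ p' - 3 < n'), h5]

theorem X_red (r n n' i : ℕ) (hr : 3 ≤ r) (hn' : n' = r + 12) (hn : n' ≤ n) (h4 : n % 4 = n' % 4)
    (hi : i < n) : ∃ i' < n', ∀ t ≤ 6, X r n (i + t) = X r n' (i' + t) := by
  by_cases c1 : i < r + 4
  · refine ⟨i, by omega, fun t ht => X_congr _ _ _ _ _ (by omega)⟩
  by_cases c2 : n ≤ i + 4
  · refine ⟨i - (n - n'), by omega, fun t ht => X_congr _ _ _ _ _ (by omega)⟩
  · refine ⟨r + 3 + (i - r - 3) % 4, by omega, fun t ht => X_congr _ _ _ _ _ (by omega)⟩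

theorem WC_trunc (e : Bool) (g : ℕ → Fin 4 → ℕ) (j : Fin 4) :
    WC e g j = WC e (fun t a => if t ≤ 6 then g t a else 0) j := by
  fin_cases j <;> simp [WC, nb]

theorem WC_congr (e : Bool) (g g' : ℕ → Fin 4 → ℕ) (j : Fin 4) (h : ∀ t ≤ 6, ∀ a, g t a = g' t a) :
    WC e g j = WC e g' j := by
  rw [WC_trunc, WC_trunc e g']
  congr 1
  funext t a
  split_ifs with ht
  · exact h t ht a
  · rfl

theorem X_small : ∀ n < 19, 3 ≤ n → ∀ i < n, ∀ j : Fin 4,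
    WC false (fun t => get (X (rr n) n (i + t))) j = true := by
  decide +kernel

theorem X_all (n : ℕ) (hn : 3 ≤ n) (i : ℕ) (hi : i < n) (j : Fin 4) :
    WC false (fun t => get (X (rr n) n (i + t))) j = true := by
  by_cases h : n < 19
  · exact X_small n h hn i hi j
  · have hr : rr (rr n + 12) = rr n := by unfold rr; omega
    obtain ⟨i', hi', h⟩ := X_red (rr n) n (rr n + 12) i (by unfold rr; omega) rfl
      (by unfold rr; omega) (by unfold rr; omega) hi
    rw [WC_congr _ _ (fun t => get (X (rr n) (rr n + 12) (i' + t))) _ (fun t ht a => by rw [h t ht])]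
    have := X_small (rr n + 12) (by unfold rr; omega) (by omega) i' hi' j
    rwa [hr] at this

theorem get_swc (c : Col) (j : Fin 4) : get (swc c) j = get c (sw j) := by
  fin_cases j <;> rfl

def fU (n : ℕ) (v : FV n) : ℕ := get (cl (rr n) v.1) v.2

theorem cl_le (r i : ℕ) (j : Fin 4) : get (cl r i) j ≤ 2 := by
  have hb : ∀ k, get (blk k) j ≤ 2 := by
    intro k
    unfold blk
    split <;> fin_cases j <;> simp [get]
  have hp : ∀ c ∈ pre r, get c j ≤ 2 := by
    unfold pre
    split <;> fin_cases j <;> simp [get]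
  unfold cl
  split_ifs
  · rw [List.getD_eq_getElem?_getD]
    cases h : (pre r)[i]? with
    | none => fin_cases j <;> simp [get]
    | some c => exact hp c (List.mem_of_getElem? h)
  · exact hb _

theorem fU_pr (n : ℕ) (hn : 3 ≤ n) (i t : ℕ) (hi : i < n) (ht : t ≤ 6) (a : Fin 4) :
    fU n (pr n (by omega) (2 * n + i - 3 + t) a) = get (X (rr n) n (i + t)) a := by
  have hn0 : 0 < n := by omega
  have sh2 : ∀ x, pr n hn0 (x + 2 * n) a = pr n hn0 x a := by
    intro x
    rw [show x + 2 * n = x + n + n by ring, pr_shift, pr_shift, sw_sw]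
  unfold X
  split_ifs with h1 h2
  · rw [show 2 * n + i - 3 + t = (n + (i + t) - 3) + n by omega, pr_shift, pr_lt hn0 _ (by omega),
      get_swc]
    rfl
  · rw [show 2 * n + i - 3 + t = (i + t - 3) + 2 * n by omega, sh2, pr_lt hn0 _ (by omega)]
    rfl
  · rw [show 2 * n + i - 3 + t = (i + t - 3 - n) + n + 2 * n by omega, sh2, pr_shift,
      pr_lt hn0 _ (by omega), get_swc]
    rfl

theorem fU_wrd (n : ℕ) (hn : 3 ≤ n) : WeakRomanDominating n (fU n) := by
  refine upper_WC hn _ (fun v => cl_le _ _ _) fun i hi j => ?_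
  rw [WC_congr _ _ (fun t => get (X (rr n) n (i + t))) _ (fun t ht a => fU_pr n hn i t hi ht a)]
  exact X_all n hn i hi j

def wc (c : Col) : ℕ := c.1 + c.2.1 + c.2.2.1 + c.2.2.2

theorem sum_cl (r k : ℕ) (hr : 3 ≤ r) (hr' : r ≤ 6) :
    2 * ∑ i ∈ Finset.range (r + 4 * k), wc (cl r i) ≤ 3 * (r + 4 * k) + 2 := by
  induction k with
  | zero => interval_cases r <;> decide
  | succ k ih =>
    rw [show r + 4 * (k + 1) = r + 4 * k + 1 + 1 + 1 + 1 by ring, Finset.sum_range_succ,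
      Finset.sum_range_succ, Finset.sum_range_succ, Finset.sum_range_succ]
    have e : ∀ s, s < 4 → cl r (r + 4 * k + s) = blk s := by
      intro s hs
      unfold cl
      rw [if_neg (by omega)]
      congr 1
      omega
    have e0 := e 0 (by omega)
    have e1 := e 1 (by omega)
    have e2 := e 2 (by omega)
    have e3 := e 3 (by omega)
    rw [add_zero] at e0
    simp only [add_assoc, Nat.reduceAdd] at *
    rw [e0, e1, e2, e3]
    have b0 : wc (blk 0) = 1 := rfl
    have b1 : wc (blk 1) = 1 := rfl
    have b2 : wc (blk 2) = 2 := rfl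
    have b3 : wc (blk 3) = 2 := rfl
    omega

theorem fU_sum (n : ℕ) (hn : 3 ≤ n) : 2 * ∑ v, fU n v ≤ 3 * n + 2 := by
  have h := sum_cl (rr n) ((n - rr n) / 4) (by unfold rr; omega) (by unfold rr; omega)
  rw [show rr n + 4 * ((n - rr n) / 4) = n by unfold rr; omega] at h
  have e : ∑ v, fU n v = ∑ i ∈ Finset.range n, wc (cl (rr n) i) := by
    rw [Finset.sum_range, Fintype.sum_prod_type]
    refine Finset.sum_congr rfl fun i _ => ?_
    rw [Fin.sum_univ_four]
    rfl
  rw [e]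
  exact h

theorem main (n : ℕ) (hn : 3 ≤ n) : weakRomanDominationNumber n = (3 * n + 2) / 2 := by
  unfold weakRomanDominationNumber
  apply le_antisymm
  · have hm : (∑ v, fU n v) ∈ {k | ∃ f : FV n → ℕ, WeakRomanDominating n f ∧ ∑ v, f v = k} :=
      ⟨fU n, fU_wrd n hn, rfl⟩
    refine (Nat.sInf_le hm).trans ?_
    have := fU_sum n hn
    omega
  · refine le_csInf ⟨_, fU n, fU_wrd n hn, rfl⟩ ?_
    rintro k ⟨f, hf, rfl⟩
    have := lower hn f hf
    omega

end FSnark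

/-- For every `n ≥ 3`, the weak Roman domination number of the flower snark
`J_n` equals `⌈(3n+1)/2⌉`. -/
theorem flowerSnark_weakRomanDomination (n : ℕ) (hn : 3 ≤ n) :
    (weakRomanDominationNumber n : ℤ) = ⌈(3 * (n : ℚ) + 1) / 2⌉ := by
  rw [FSnark.main n hn, eq_comm, Int.ceil_eq_iff]
  rcases Nat.even_or_odd' n with ⟨m, rfl | rfl⟩
  · rw [show (3 * (2 * m) + 2) / 2 = 3 * m + 1 by omega]
    push_cast
    constructor <;> linarith
  · rw [show (3 * (2 * m + 1) + 2) / 2 = 3 * m + 2 by omega]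
    push_cast
    constructor <;> linarith
end

section
/- Let n ≥ 3 and let S be a minimal dominating set of the flower snark J_n. Then for every i, the weight of the copy J^i in S (i.e. |S ∩ {a^i, b^i, c^i, d^i}|) is 1, 2, or 3. -/
/-- If `n ≥ 3` and `S` is a minimal dominating set of the flower snark `J_n`,
then every copy `J^i` has weight 1, 2 or 3 in `S`. -/
theorem flowerSnark_minimalDominating_copyWeight (n : ℕ) (hn : 3 ≤ n)
    (S : Set (FV n)) (hS : MinimalDominating n S) :
    ∀ i : Fin n, copyWeight S (i : ℕ) = 1 ∨ copyWeight S (i : ℕ) = 2 ∨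
      copyWeight S (i : ℕ) = 3 := by
  intro i
  obtain ⟨hD, hM⟩ := hS
  have key : ∀ v w : FV n, (flowerSnark n).Adj v w → (v.2 = 0 ∨ w.2 = 0) → v.1 = w.1 := by
    intro v w h h0
    simp only [flowerSnark, SimpleGraph.fromRel_adj] at h
    rcases h0 with h0 | h0 <;> simp [h0] at h <;> grind
  have hC : {v : FV n | (v.1 : ℕ) = (i : ℕ) % n} = Set.range (fun k : Fin 4 => ((i, k) : FV n)) := by
    ext ⟨j, k⟩
    simp [Nat.mod_eq_of_lt i.2, Fin.ext_iff, eq_comm]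
  have hcard : (Set.range (fun k : Fin 4 => ((i, k) : FV n))).ncard = 4 := by
    rw [← Set.image_univ, Set.ncard_image_of_injective _ (fun a b h => by simpa using h)]
    simp
  unfold copyWeight
  rw [hC]
  have hle : (S ∩ Set.range (fun k : Fin 4 => ((i, k) : FV n))).ncard ≤ 4 :=
    (Set.ncard_le_ncard (fun _ hx => hx.2) (Set.toFinite _)).trans hcard.le
  have h0 : (S ∩ Set.range (fun k : Fin 4 => ((i, k) : FV n))).ncard ≠ 0 := by
    rw [← Nat.pos_iff_ne_zero, Set.ncard_pos (Set.toFinite _)]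
    by_cases ha : ((i, 0) : FV n) ∈ S
    · exact ⟨_, ha, 0, rfl⟩
    · obtain ⟨⟨j, k⟩, hw, hadj⟩ := hD _ ha
      have := key _ _ hadj (Or.inl rfl)
      simp only at this
      subst this
      exact ⟨_, hw, k, rfl⟩
  have h4 : (S ∩ Set.range (fun k : Fin 4 => ((i, k) : FV n))).ncard ≠ 4 := by
    intro h
    have heq := Set.eq_of_subset_of_ncard_le
      (Set.inter_subset_right (s := S) (t := Set.range (fun k : Fin 4 => ((i, k) : FV n))))
      (by rw [h, hcard]) (Set.toFinite _)
    have hall : ∀ k : Fin 4, ((i, k) : FV n) ∈ S := fun k =>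
      Set.inter_eq_right.mp heq ⟨k, rfl⟩
    refine hM (S \ {((i, 0) : FV n)}) ?_ ?_
    · exact Set.sdiff_singleton_ssubset.mpr (hall 0)
    · intro v hv
      by_cases hva : v = (i, 0)
      · subst hva
        refine ⟨(i, 1), ⟨hall 1, by simp⟩, ?_⟩
        simp [flowerSnark, SimpleGraph.fromRel_adj]
      · have hvS : v ∉ S := fun h => hv ⟨h, hva⟩
        obtain ⟨w, hw, hadj⟩ := hD v hvS
        refine ⟨w, ⟨hw, ?_⟩, hadj⟩
        rintro rfl
        have := key _ _ hadj (Or.inr rfl)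
        obtain ⟨j, k⟩ := v
        simp only at this
        subst this
        exact hvS (hall k)
  omega
end
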